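/- arXiv:2210.07671 — 2 statements merged into one kernel-verified Lean document; each statement's English description precedes it below -/
import Mathlib

section
/- Let A = {0,2,5,7} and n = 8, and let U_A be the set of z ∈ [0,2] having a unique representation z = x + y with (x,y) ∈ C_{A,8} × C_{A,8}, x ≤ y. Then dim_H(U_A) = log 3 / log 8. -/
open MeasureTheory Pointwise

def linCantor (n : ℕ) (A : Set ℕ) : Set ℝ :=
  {x | ∃ a : ℕ → ℕ, (∀ i, a i ∈ A) ∧ x = ∑' i : ℕ, (a i : ℝ) / n ^ (i + 1)}

def Dg (a : ℕ → ℕ) : Prop := ∀ i, a i = 0 ∨ a i = 2 ∨ a i = 5 ∨ a i = 7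

noncomputable def tl (a : ℕ → ℕ) (n : ℕ) : ℝ := ∑' i : ℕ, (a (i + n) : ℝ) / 8 ^ (i + 1)

lemma Dg.le {a : ℕ → ℕ} (h : Dg a) (i : ℕ) : (a i : ℝ) ≤ 7 := by
  have : a i ≤ 7 := by rcases h i with h | h | h | h <;> omega
  exact_mod_cast this

lemma geo8 : HasSum (fun i : ℕ => (7 : ℝ) / 8 ^ (i + 1)) 1 := by
  have := (hasSum_geometric_of_lt_one (r := (1/8 : ℝ)) (by norm_num) (by norm_num)).mul_left (7/8)
  have h1 : (7 / 8 : ℝ) * (1 - 1 / 8)⁻¹ = 1 := by norm_num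
  rw [h1] at this
  have h2 : (fun i : ℕ => (7 : ℝ) / 8 ^ (i + 1)) = fun i => 7 / 8 * (1 / 8) ^ i := by
    funext i
    rw [pow_succ, one_div, inv_pow]; field_simp
  rw [h2]
  exact this

lemma tl_summable {a : ℕ → ℕ} (h : Dg a) (n : ℕ) :
    Summable (fun i : ℕ => (a (i + n) : ℝ) / 8 ^ (i + 1)) := by
  refine Summable.of_nonneg_of_le (fun i => by positivity) (fun i => ?_) geo8.summable
  have := h.le (i + n)
  gcongr

lemma tl_nonneg (a : ℕ → ℕ) (n : ℕ) : 0 ≤ tl a n := tsum_nonneg fun i => by positivity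

lemma tl_le {a : ℕ → ℕ} (h : Dg a) (n : ℕ) : tl a n ≤ 1 := by
  rw [← geo8.tsum_eq]
  refine (tl_summable h n).tsum_le_tsum (fun i => ?_) geo8.summable
  have := h.le (i + n)
  gcongr

lemma tl_step {a : ℕ → ℕ} (h : Dg a) (n : ℕ) : tl a n = (a n + tl a (n + 1)) / 8 := by
  unfold tl
  rw [(tl_summable h n).tsum_eq_zero_add, add_div, ← tsum_div_const]
  congr 1
  · simp
  · refine tsum_congr fun i => ?_
    rw [show i + 1 + n = i + (n + 1) by ring, pow_succ _ (i + 1)]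
    field_simp

lemma mem_lin {x : ℝ} : x ∈ linCantor 8 {0, 2, 5, 7} ↔ ∃ a, Dg a ∧ x = tl a 0 := by
  simp [linCantor, Dg, tl]

lemma tl_agree {a b : ℕ → ℕ} (ha : Dg a) (hb : Dg b) (n : ℕ) (h : ∀ i < n, a i = b i) :
    tl a 0 - tl b 0 = (tl a n - tl b n) / 8 ^ n := by
  induction n with
  | zero => simp
  | succ k ih =>
    rw [ih fun i hi => h i (by omega), tl_step ha k, tl_step hb k, h k (by omega), pow_succ]
    field_simp
    ring

lemma tl_nat {a : ℕ → ℕ} (ha : Dg a) (n : ℕ) : ∃ m : ℕ, tl a 0 = (m + tl a n) / 8 ^ n := by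
  induction n with
  | zero => exact ⟨0, by simp⟩
  | succ k ih =>
    obtain ⟨m, hm⟩ := ih
    refine ⟨8 * m + a k, ?_⟩
    rw [hm, tl_step ha k, pow_succ]
    push_cast
    field_simp
    ring

/-- splice -/
def spl (a : ℕ → ℕ) (n c : ℕ) (p : ℕ → ℕ) : ℕ → ℕ :=
  fun i => if i < n then a i else if i = n then c else p (i - (n + 1))

lemma spl_Dg {a p : ℕ → ℕ} {n c : ℕ} (ha : Dg a) (hp : Dg p)
    (hc : c = 0 ∨ c = 2 ∨ c = 5 ∨ c = 7) : Dg (spl a n c p) := by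
  intro i
  unfold spl
  split_ifs
  · exact ha i
  · exact hc
  · exact hp _

lemma tl_spl {a p : ℕ → ℕ} {n c : ℕ} (ha : Dg a) (hp : Dg p)
    (hc : c = 0 ∨ c = 2 ∨ c = 5 ∨ c = 7) :
    tl (spl a n c p) 0 = tl a 0 + (c + tl p 0 - a n - tl a (n + 1)) / 8 ^ (n + 1) := by
  have hs := spl_Dg (n := n) ha hp hc
  have h1 := tl_agree hs ha n (fun i hi => by simp [spl, hi])
  have h2 := tl_step hs n
  have h3 := tl_step ha n
  have h4 : tl (spl a n c p) (n + 1) = tl p 0 := by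
    unfold tl
    refine tsum_congr fun i => ?_
    have : spl a n c p (i + (n + 1)) = p (i + 0) := by
      unfold spl
      rw [if_neg (by omega), if_neg (by omega)]
      congr 1
      omega
    rw [this]
  have h5 : spl a n c p n = c := by simp [spl]
  rw [h4, h5] at h2
  rw [h2, h3] at h1
  have : tl (spl a n c p) 0 = tl a 0 + ((c + tl p 0) / 8 - (a n + tl a (n + 1)) / 8) / 8 ^ n := by
    linarith
  rw [this, pow_succ]
  field_simp
  ring

lemma sum_step (u : ℝ) (h0 : 0 ≤ u) (h2 : u ≤ 2) : ∃ q : ℕ × ℕ × ℝ,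
    (q.1 = 0 ∨ q.1 = 2 ∨ q.1 = 5 ∨ q.1 = 7) ∧ (q.2.1 = 0 ∨ q.2.1 = 2 ∨ q.2.1 = 5 ∨ q.2.1 = 7) ∧
    0 ≤ q.2.2 ∧ q.2.2 ≤ 2 ∧ u = (q.1 + q.2.1 + q.2.2) / 8 := by
  have key : ∀ c d : ℕ, (c = 0 ∨ c = 2 ∨ c = 5 ∨ c = 7) → (d = 0 ∨ d = 2 ∨ d = 5 ∨ d = 7) →
      (c + d : ℝ) ≤ 8 * u → 8 * u ≤ c + d + 2 → ∃ q : ℕ × ℕ × ℝ,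
    (q.1 = 0 ∨ q.1 = 2 ∨ q.1 = 5 ∨ q.1 = 7) ∧ (q.2.1 = 0 ∨ q.2.1 = 2 ∨ q.2.1 = 5 ∨ q.2.1 = 7) ∧
    0 ≤ q.2.2 ∧ q.2.2 ≤ 2 ∧ u = (q.1 + q.2.1 + q.2.2) / 8 := by
    intro c d hc hd h1 h2
    refine ⟨(c, d, 8 * u - c - d), hc, hd, ?_, ?_, ?_⟩ <;> simp only <;> linarith
  by_cases h : 8 * u ≤ 2
  · exact key 0 0 (by simp) (by simp) (by norm_num; linarith) (by norm_num; linarith)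
  by_cases h : 8 * u ≤ 4
  · exact key 0 2 (by simp) (by simp) (by norm_num; linarith) (by norm_num; linarith)
  by_cases h : 8 * u ≤ 6
  · exact key 2 2 (by simp) (by simp) (by norm_num; linarith) (by norm_num; linarith)
  by_cases h : 8 * u ≤ 7
  · exact key 0 5 (by simp) (by simp) (by norm_num; linarith) (by norm_num; linarith)
  by_cases h : 8 * u ≤ 9
  · exact key 0 7 (by simp) (by simp) (by norm_num; linarith) (by norm_num; linarith)
  by_cases h : 8 * u ≤ 11
  · exact key 2 7 (by simp) (by simp) (by norm_num; linarith) (by norm_num; linarith)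
  by_cases h : 8 * u ≤ 12
  · exact key 5 5 (by simp) (by simp) (by norm_num; linarith) (by norm_num; linarith)
  by_cases h : 8 * u ≤ 14
  · exact key 5 7 (by simp) (by simp) (by norm_num; linarith) (by norm_num; linarith)
  · exact key 7 7 (by simp) (by simp) (by norm_num; linarith) (by norm_num; linarith)

lemma eq_zero_of_pow {x : ℝ} (h : ∀ n : ℕ, |x| ≤ 2 / 8 ^ n) : x = 0 := by
  have ht : Filter.Tendsto (fun n : ℕ => (2 : ℝ) / 8 ^ n) Filter.atTop (nhds 0) := by
    have := (tendsto_pow_atTop_nhds_zero_of_lt_one (r := (1/8 : ℝ))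
      (by norm_num) (by norm_num)).const_mul 2
    simpa [div_eq_mul_inv] using this
  have := ge_of_tendsto' ht h
  exact abs_eq_zero.1 (le_antisymm this (abs_nonneg _))

lemma sum_cover (u : ℝ) (h0 : 0 ≤ u) (h2 : u ≤ 2) :
    ∃ p q : ℕ → ℕ, Dg p ∧ Dg q ∧ tl p 0 + tl q 0 = u := by
  choose! F hF1 hF2 hF3 hF4 hF5 using sum_step
  let w : ℕ → ℝ := fun n => (fun v => (F v).2.2)^[n] u
  have ws : ∀ n, w (n + 1) = (F (w n)).2.2 := fun n => Function.iterate_succ_apply' _ _ _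
  have hw : ∀ n, 0 ≤ w n ∧ w n ≤ 2 := by
    intro n
    induction n with
    | zero => exact ⟨h0, h2⟩
    | succ k ih => rw [ws]; exact ⟨hF3 _ ih.1 ih.2, hF4 _ ih.1 ih.2⟩
  let p : ℕ → ℕ := fun n => (F (w n)).1
  let q : ℕ → ℕ := fun n => (F (w n)).2.1
  have hp : Dg p := fun n => hF1 _ (hw n).1 (hw n).2
  have hq : Dg q := fun n => hF2 _ (hw n).1 (hw n).2
  have hstep : ∀ n, w n = (p n + q n + w (n + 1)) / 8 := fun n => by
    rw [ws]; exact hF5 _ (hw n).1 (hw n).2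
  have hall : ∀ n, tl p 0 + tl q 0 - u = (tl p n + tl q n - w n) / 8 ^ n := by
    intro n
    induction n with
    | zero => simp [w]
    | succ k ih =>
      rw [ih, tl_step hp k, tl_step hq k, hstep k, pow_succ]
      field_simp
      ring
  refine ⟨p, q, hp, hq, ?_⟩
  have := eq_zero_of_pow (x := tl p 0 + tl q 0 - u) fun n => by
    rw [hall n, abs_div, abs_of_pos (a := (8 : ℝ) ^ n) (by positivity)]
    gcongr
    have := hw n
    have := tl_le hp n
    have := tl_le hq n
    have := tl_nonneg p n
    have := tl_nonneg q n
    rw [abs_le]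
    constructor <;> linarith
  linarith
/-- valid digit sequences -/
def Vd (e : ℕ → ℕ) : Prop := Dg e ∧
  (∀ i, e i = 2 → e (i + 1) = 0 ∨ e (i + 1) = 2) ∧ (∀ i, e i = 5 → e (i + 1) = 5 ∨ e (i + 1) = 7)

def US : Set ℝ := {z : ℝ | z ∈ Set.Icc (0 : ℝ) 2 ∧
      ∃! p : ℝ × ℝ, p.1 ∈ linCantor 8 {0, 2, 5, 7} ∧ p.2 ∈ linCantor 8 {0, 2, 5, 7} ∧
        p.1 ≤ p.2 ∧ p.1 + p.2 = z}

lemma lo {e : ℕ → ℕ} (h : Dg e) {n : ℕ} (he : e n = 0 ∨ e n = 2) : tl e n ≤ 3 / 8 := by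
  rw [tl_step h n]
  have := tl_le h (n + 1)
  rcases he with he | he <;> rw [he] <;> norm_num <;> linarith

lemma hi {e : ℕ → ℕ} (h : Dg e) {n : ℕ} (he : e n = 5 ∨ e n = 7) : 5 / 8 ≤ tl e n := by
  rw [tl_step h n]
  have := tl_nonneg e (n + 1)
  rcases he with he | he <;> rw [he] <;> norm_num <;> linarith

lemma step_unique {a b e : ℕ} {E P Q : ℝ} (ha : a = 0 ∨ a = 2 ∨ a = 5 ∨ a = 7)
    (hb : b = 0 ∨ b = 2 ∨ b = 5 ∨ b = 7) (he : e = 0 ∨ e = 2 ∨ e = 5 ∨ e = 7)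
    (hP : 0 ≤ P) (hP1 : P ≤ 1) (hQ : 0 ≤ Q) (hQ1 : Q ≤ 1) (hE : 0 < E) (hE1 : E < 1)
    (h2 : e = 2 → E ≤ 3 / 8) (h5 : e = 5 → 5 / 8 ≤ E)
    (h : 2 * ((e + E) / 8) = (a + P) / 8 + (b + Q) / 8) : a = e ∧ b = e := by
  rcases he with rfl | rfl | rfl | rfl <;> rcases ha with rfl | rfl | rfl | rfl <;>
  rcases hb with rfl | rfl | rfl | rfl <;> simp at h2 h5 h ⊢ <;> linarith

lemma unique_of_valid {e a b : ℕ → ℕ} (he : Vd e) (ha : Dg a) (hb : Dg b)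
    (hD : tl e 0 ∉ Set.range ((↑) : ℚ → ℝ)) (h : 2 * tl e 0 = tl a 0 + tl b 0) :
    ∀ n, 2 * tl e n = tl a n + tl b n ∧ ∀ i < n, a i = e i ∧ b i = e i := by
  intro n
  induction n with
  | zero => exact ⟨h, by simp⟩
  | succ n ih =>
    obtain ⟨h1, h2⟩ := ih
    have hE0 : tl e (n + 1) ≠ 0 := by
      intro h0
      obtain ⟨m, hm⟩ := tl_nat he.1 (n + 1)
      exact hD ⟨(m : ℚ) / 8 ^ (n + 1), by rw [hm, h0]; push_cast; ring⟩
    have hE1 : tl e (n + 1) ≠ 1 := by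
      intro h0
      obtain ⟨m, hm⟩ := tl_nat he.1 (n + 1)
      exact hD ⟨((m : ℚ) + 1) / 8 ^ (n + 1), by rw [hm, h0]; push_cast; ring⟩
    rw [tl_step he.1 n, tl_step ha n, tl_step hb n] at h1
    have key := step_unique (ha n) (hb n) (he.1 n) (tl_nonneg a (n + 1)) (tl_le ha _)
      (tl_nonneg b (n + 1)) (tl_le hb _) (lt_of_le_of_ne (tl_nonneg e _) hE0.symm)
      (lt_of_le_of_ne (tl_le he.1 _) hE1) (fun h => lo he.1 (he.2.1 n h))
      (fun h => hi he.1 (he.2.2 n h)) h1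
    rw [key.1, key.2] at h1
    refine ⟨by linarith, fun i hi => ?_⟩
    rcases Nat.lt_succ_iff_lt_or_eq.1 hi with h | rfl
    · exact h2 i h
    · exact key

lemma mem_US {e : ℕ → ℕ} (he : Vd e) (hD : tl e 0 ∉ Set.range ((↑) : ℚ → ℝ)) :
    2 * tl e 0 ∈ US := by
  refine ⟨⟨by linarith [tl_nonneg e 0], by linarith [tl_le he.1 0]⟩, (tl e 0, tl e 0), ?_, ?_⟩
  · exact ⟨mem_lin.2 ⟨e, he.1, rfl⟩, mem_lin.2 ⟨e, he.1, rfl⟩, le_rfl, by simp only; ring⟩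
  · rintro ⟨x, y⟩ ⟨hx, hy, -, hs⟩
    obtain ⟨a, ha, rfl⟩ := mem_lin.1 hx
    obtain ⟨b, hb, rfl⟩ := mem_lin.1 hy
    have h := unique_of_valid he ha hb hD hs.symm
    have h1 : a = e := funext fun i => ((h (i + 1)).2 i (by omega)).1
    have h2 : b = e := funext fun i => ((h (i + 1)).2 i (by omega)).2
    rw [h1, h2]

/-- tails of elements of `US` -/
lemma US_tail {z : ℝ} (hz : z ∈ US) :
    ∃ (N m : ℕ) (e : ℕ → ℕ), Vd e ∧ z = (m + 2 * tl e 0) / 8 ^ N := by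
  obtain ⟨-, ⟨x, y⟩, ⟨hx, hy, hxy, hs⟩, huniq⟩ := hz
  have hor : ∀ x' y', x' ∈ linCantor 8 {0, 2, 5, 7} → y' ∈ linCantor 8 {0, 2, 5, 7} →
      x' + y' = z → x' = x ∨ x' = y := by
    intro x' y' h1 h2 h3
    rcases le_total x' y' with h | h
    · left; have := huniq (x', y') ⟨h1, h2, h, h3⟩; simp at this; exact this.1
    · right
      have := huniq (y', x') ⟨h2, h1, h, by simpa [add_comm] using h3⟩
      simp at this; exact this.2
  obtain ⟨a, ha, rfl⟩ := mem_lin.1 hx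
  obtain ⟨b, hb, rfl⟩ := mem_lin.1 hy
  simp only at hs
  clear huniq
  have shD : ∀ {c : ℕ → ℕ} (n : ℕ), Dg c → Dg (fun i => c (i + n)) := fun n h i => h _
  have shv : ∀ (c : ℕ → ℕ) (n : ℕ), tl (fun i => c (i + n)) 0 = tl c n := fun c n => by simp [tl]
  -- general replacement
  have repl : ∀ (n c d : ℕ) (p q : ℕ → ℕ), (c = 0 ∨ c = 2 ∨ c = 5 ∨ c = 7) →
      (d = 0 ∨ d = 2 ∨ d = 5 ∨ d = 7) → Dg p → Dg q →
      (c + tl p 0) + (d + tl q 0) = (a n + tl a (n + 1)) + (b n + tl b (n + 1)) →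
      c + tl p 0 = a n + tl a (n + 1) ∨
      (c + tl p 0 - a n - tl a (n + 1)) / 8 ^ (n + 1) = tl b 0 - tl a 0 := by
    intro n c d p q hc hd hp hq hsum
    have h1 := tl_spl (n := n) ha hp hc
    have h2 := tl_spl (n := n) hb hq hd
    have hsum' : (d + tl q 0 - b n - tl b (n + 1)) = - (c + tl p 0 - a n - tl a (n + 1)) := by
      linarith
    rw [hsum', neg_div] at h2
    rcases hor _ _ (mem_lin.2 ⟨_, spl_Dg (n := n) ha hp hc, rfl⟩)
      (mem_lin.2 ⟨_, spl_Dg (n := n) hb hq hd, rfl⟩) (by rw [h1, h2]; linarith) with h | h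
    · left
      rw [h1] at h
      have h3 : (c + tl p 0 - a n - tl a (n + 1)) / 8 ^ (n + 1) = 0 := by linarith
      rcases div_eq_zero_iff.1 h3 with h4 | h4
      · linarith
      · exact absurd h4 (by positivity)
    · right
      rw [h1] at h; linarith
  have swp : ∀ n, a n ≠ b n → ((b n : ℝ) - a n) / 8 ^ (n + 1) = tl b 0 - tl a 0 := by
    intro n hn
    rcases repl n (b n) (a n) _ _ (hb n) (ha n) (shD (n + 1) ha) (shD (n + 1) hb)
      (by rw [shv, shv]; ring) with h | h
    · rw [shv] at h
      have : (b n : ℝ) = a n := by linarith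
      exact absurd (by exact_mod_cast this.symm) hn
    · rw [shv] at h; rw [← h]; congr 1; ring
  have once : ∀ i j, i < j → a i ≠ b i → a j ≠ b j → False := by
    intro i j hij hi hj
    have h := (swp i hi).trans (swp j hj).symm
    obtain ⟨k, rfl⟩ := Nat.exists_eq_add_of_lt hij
    have h8 : ((b i : ℝ) - a i) * 8 ^ (k + 1) = b (i + k + 1) - a (i + k + 1) := by
      have : (8 : ℝ) ^ (i + k + 1 + 1) = 8 ^ (i + 1) * 8 ^ (k + 1) := by rw [← pow_add]; congr 1; ring
      rw [this] at h
      field_simp at h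
      linarith
    have h9 : ((b i : ℤ) - a i) * 8 ^ (k + 1) = b (i + k + 1) - a (i + k + 1) := by
      exact_mod_cast h8
    have hdvd : (8 : ℤ) ∣ b (i + k + 1) - a (i + k + 1) := by
      rw [← h9, pow_succ]; exact ⟨(b i - a i) * 8 ^ k, by ring⟩
    have := ha (i + k + 1)
    have := hb (i + k + 1)
    omega
  obtain ⟨N, hN⟩ : ∃ N, ∀ i, N ≤ i → a i = b i := by
    by_cases h : ∃ i, a i ≠ b i
    · obtain ⟨i, hi⟩ := h
      refine ⟨i + 1, fun j hj => ?_⟩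
      by_contra hne
      exact once i j (by omega) hi hne
    · push Not at h
      exact ⟨0, fun i _ => h i⟩
  have htl : ∀ n, N ≤ n → tl b n = tl a n := by
    intro n hn
    unfold tl
    refine tsum_congr fun i => ?_
    rw [hN (i + n) (by omega)]
  refine ⟨N, ?_⟩
  obtain ⟨m1, hm1⟩ := tl_nat ha N
  obtain ⟨m2, hm2⟩ := tl_nat hb N
  refine ⟨m1 + m2, fun i => a (i + N), ⟨shD N ha, ?_, ?_⟩, ?_⟩
  · intro i hi2
    by_contra hcon
    beta_reduce at hi2 hcon
    have h57 : a (i + N + 1) = 5 ∨ a (i + N + 1) = 7 := by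
      have := ha (i + N + 1)
      rw [show i + 1 + N = i + N + 1 by ring] at hcon
      omega
    have hT := hi ha h57
    have hT1 := tl_le ha (i + N + 1)
    obtain ⟨p, q, hp, hq, hpq⟩ := sum_cover (2 * tl a (i + N + 1) - 1) (by linarith) (by linarith)
    have hb' : b (i + N) = a (i + N) := (hN _ (by omega)).symm
    have hbt := htl (i + N + 1) (by omega)
    have e1 := repl (i + N) 0 5 p q (by simp) (by simp) hp hq
      (by rw [hb', hbt, hi2]; push_cast; linarith)
    have e2 := repl (i + N) 5 0 q p (by simp) (by simp) hq hp
      (by rw [hb', hbt, hi2]; push_cast; linarith)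
    rw [hi2] at e1 e2
    push_cast at e1 e2
    have := tl_le hp 0
    have := tl_le hq 0
    have := tl_nonneg p 0
    have := tl_nonneg q 0
    rcases e1 with e1 | e1
    · linarith
    rcases e2 with e2 | e2
    · linarith
    have := e1.trans e2.symm
    field_simp at this
    linarith
  · intro i hi2
    by_contra hcon
    beta_reduce at hi2 hcon
    have h57 : a (i + N + 1) = 0 ∨ a (i + N + 1) = 2 := by
      have := ha (i + N + 1)
      rw [show i + 1 + N = i + N + 1 by ring] at hcon
      omega
    have hT := lo ha h57
    have hT1 := tl_nonneg a (i + N + 1)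
    obtain ⟨p, q, hp, hq, hpq⟩ := sum_cover (2 * tl a (i + N + 1) + 1) (by linarith) (by linarith)
    have hb' : b (i + N) = a (i + N) := (hN _ (by omega)).symm
    have hbt := htl (i + N + 1) (by omega)
    have e1 := repl (i + N) 2 7 p q (by simp) (by simp) hp hq
      (by rw [hb', hbt, hi2]; push_cast; linarith)
    have e2 := repl (i + N) 7 2 q p (by simp) (by simp) hq hp
      (by rw [hb', hbt, hi2]; push_cast; linarith)
    rw [hi2] at e1 e2
    push_cast at e1 e2
    have := tl_le hp 0
    have := tl_le hq 0
    have := tl_nonneg p 0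
    have := tl_nonneg q 0
    rcases e1 with e1 | e1
    · linarith
    rcases e2 with e2 | e2
    · linarith
    have := e1.trans e2.symm
    field_simp at this
    linarith
  · rw [shv, ← hs, hm1, hm2, htl N le_rfl]
    push_cast
    ring
def Cov (X : Set ℝ) (k : ℕ) : Prop :=
  ∃ T : Finset ℝ, T.card ≤ 3 ^ k ∧ ∀ x ∈ X, ∃ t ∈ T, t ≤ x ∧ x ≤ t + 1 / 8 ^ k

lemma Cov.step {X X1 X2 X3 : Set ℝ} {k : ℕ} (c1 c2 c3 : ℝ) (h1 : Cov X1 k) (h2 : Cov X2 k)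
    (h3 : Cov X3 k) (h : ∀ x ∈ X, (∃ y ∈ X1, x = (c1 + y) / 8) ∨ (∃ y ∈ X2, x = (c2 + y) / 8) ∨
      (∃ y ∈ X3, x = (c3 + y) / 8)) : Cov X (k + 1) := by
  classical
  obtain ⟨T1, hc1, h1⟩ := h1
  obtain ⟨T2, hc2, h2⟩ := h2
  obtain ⟨T3, hc3, h3⟩ := h3
  refine ⟨T1.image (fun t => (c1 + t) / 8) ∪ (T2.image (fun t => (c2 + t) / 8) ∪
    T3.image (fun t => (c3 + t) / 8)), ?_, ?_⟩
  · have a1 := T1.card_image_le (f := fun t => (c1 + t) / 8)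
    have a2 := T2.card_image_le (f := fun t => (c2 + t) / 8)
    have a3 := T3.card_image_le (f := fun t => (c3 + t) / 8)
    have b1 := Finset.card_union_le (T1.image (fun t => (c1 + t) / 8))
      (T2.image (fun t => (c2 + t) / 8) ∪ T3.image (fun t => (c3 + t) / 8))
    have b2 := Finset.card_union_le (T2.image (fun t => (c2 + t) / 8))
      (T3.image (fun t => (c3 + t) / 8))
    rw [pow_succ]
    omega
  · have key : ∀ (c t y : ℝ), t ≤ y → y ≤ t + 1 / 8 ^ k →
        (c + t) / 8 ≤ (c + y) / 8 ∧ (c + y) / 8 ≤ (c + t) / 8 + 1 / 8 ^ (k + 1) := by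
      intro c t y h1 h2
      have : (1 : ℝ) / 8 ^ (k + 1) = (1 / 8 ^ k) / 8 := by rw [pow_succ]; field_simp
      rw [this]
      constructor <;> linarith
    intro x hx
    simp only [Finset.mem_union, Finset.mem_image]
    rcases h x hx with ⟨y, hy, rfl⟩ | ⟨y, hy, rfl⟩ | ⟨y, hy, rfl⟩
    · obtain ⟨t, ht, h4, h5⟩ := h1 y hy
      exact ⟨_, Or.inl ⟨t, ht, rfl⟩, key _ _ _ h4 h5⟩
    · obtain ⟨t, ht, h4, h5⟩ := h2 y hy
      exact ⟨_, Or.inr (Or.inl ⟨t, ht, rfl⟩), key _ _ _ h4 h5⟩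
    · obtain ⟨t, ht, h4, h5⟩ := h3 y hy
      exact ⟨_, Or.inr (Or.inr ⟨t, ht, rfl⟩), key _ _ _ h4 h5⟩

def XL : Set ℝ := {x | ∃ e, Vd e ∧ (e 0 = 0 ∨ e 0 = 2) ∧ x = tl e 0}
def XH : Set ℝ := {x | ∃ e, Vd e ∧ (e 0 = 5 ∨ e 0 = 7) ∧ x = tl e 0}

lemma Vd.sh {e : ℕ → ℕ} (h : Vd e) : Vd (fun i => e (i + 1)) :=
  ⟨fun _ => h.1 _, fun _ => h.2.1 _, fun _ => h.2.2 _⟩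

lemma tl_sh {e : ℕ → ℕ} (h : Dg e) : tl e 0 = (e 0 + tl (fun i => e (i + 1)) 0) / 8 := by
  rw [tl_step h 0]; simp [tl]

lemma cov_all (k : ℕ) : Cov XL k ∧ Cov XH k := by
  induction k with
  | zero =>
    constructor
    · refine ⟨{0}, by simp, ?_⟩
      rintro x ⟨e, he, -, rfl⟩
      exact ⟨0, by simp, tl_nonneg _ _, by simpa using tl_le he.1 0⟩
    · refine ⟨{0}, by simp, ?_⟩
      rintro x ⟨e, he, -, rfl⟩
      exact ⟨0, by simp, tl_nonneg _ _, by simpa using tl_le he.1 0⟩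
  | succ k ih =>
    obtain ⟨h1, h2⟩ := ih
    constructor
    · refine Cov.step 0 0 2 h1 h2 h1 ?_
      rintro x ⟨e, he, h0, rfl⟩
      have hs := tl_sh he.1
      rcases h0 with h0 | h0
      · rcases he.1 1 with h | h | h | h
        · exact Or.inl ⟨_, ⟨_, he.sh, by simp [h], rfl⟩, by rw [hs, h0]; norm_num⟩
        · exact Or.inl ⟨_, ⟨_, he.sh, by simp [h], rfl⟩, by rw [hs, h0]; norm_num⟩
        · exact Or.inr (Or.inl ⟨_, ⟨_, he.sh, by simp [h], rfl⟩, by rw [hs, h0]; norm_num⟩)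
        · exact Or.inr (Or.inl ⟨_, ⟨_, he.sh, by simp [h], rfl⟩, by rw [hs, h0]; norm_num⟩)
      · exact Or.inr (Or.inr ⟨_, ⟨_, he.sh, he.2.1 0 h0, rfl⟩, by rw [hs, h0]; norm_num⟩)
    · refine Cov.step 7 7 5 h1 h2 h2 ?_
      rintro x ⟨e, he, h0, rfl⟩
      have hs := tl_sh he.1
      rcases h0 with h0 | h0
      · exact Or.inr (Or.inr ⟨_, ⟨_, he.sh, he.2.2 0 h0, rfl⟩, by rw [hs, h0]; norm_num⟩)
      · rcases he.1 1 with h | h | h | h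
        · exact Or.inl ⟨_, ⟨_, he.sh, by simp [h], rfl⟩, by rw [hs, h0]; norm_num⟩
        · exact Or.inl ⟨_, ⟨_, he.sh, by simp [h], rfl⟩, by rw [hs, h0]; norm_num⟩
        · exact Or.inr (Or.inl ⟨_, ⟨_, he.sh, by simp [h], rfl⟩, by rw [hs, h0]; norm_num⟩)
        · exact Or.inr (Or.inl ⟨_, ⟨_, he.sh, by simp [h], rfl⟩, by rw [hs, h0]; norm_num⟩)

lemma rpos : 0 < Real.log 3 / Real.log 8 :=
  div_pos (Real.log_pos (by norm_num)) (Real.log_pos (by norm_num))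

lemma pow_r (k : ℕ) : ((1 : ℝ) / 8 ^ k) ^ (Real.log 3 / Real.log 8) = 1 / 3 ^ k := by
  have h8 : (8 : ℝ) ^ (Real.log 3 / Real.log 8) = 3 := by
    rw [Real.rpow_def_of_pos (by norm_num), mul_div_cancel₀, Real.exp_log (by norm_num)]
    exact (Real.log_pos (by norm_num)).ne'
  rw [Real.div_rpow (by norm_num) (by positivity), Real.one_rpow, ← Real.rpow_natCast,
    ← Real.rpow_mul (by norm_num), mul_comm, Real.rpow_mul (by norm_num), h8, Real.rpow_natCast]

lemma dimH_cov {X : Set ℝ} (h : ∀ k, Cov X k) :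
    dimH X ≤ ENNReal.ofReal (Real.log 3 / Real.log 8) := by
  have hr := rpos
  have hp := pow_r
  set r := Real.log 3 / Real.log 8 with hrdef
  choose T hT1 hT2 using h
  have hle : μH[r] X ≤ 1 := by
    have := Measure.hausdorffMeasure_le_liminf_sum (ι := fun k => ↥(T k)) r X
      (l := Filter.atTop) (fun k : ℕ => ENNReal.ofReal (1 / 8 ^ k)) ?_
      (fun k t => Set.Icc (t : ℝ) (t + 1 / 8 ^ k)) ?_ ?_
    · refine this.trans ?_
      refine (Filter.liminf_le_liminf (v := fun _ => (1 : ENNReal)) (Filter.Eventually.of_forall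
        fun k => ?_)).trans (by simp)
      simp only [Real.ediam_Icc, add_sub_cancel_left]
      rw [ENNReal.ofReal_rpow_of_nonneg (by positivity) hr.le, hp k]
      rw [Finset.sum_const, Finset.card_univ, Fintype.card_coe, nsmul_eq_mul]
      rw [← ENNReal.ofReal_natCast, ← ENNReal.ofReal_mul (by positivity)]
      rw [← ENNReal.ofReal_one]
      apply ENNReal.ofReal_le_ofReal
      rw [mul_one_div, div_le_one (by positivity)]
      exact_mod_cast hT1 k
    · have ht : Filter.Tendsto (fun n : ℕ => (1 : ℝ) / 8 ^ n) Filter.atTop (nhds 0) := by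
        have := (tendsto_pow_atTop_nhds_zero_of_lt_one (r := (1/8 : ℝ))
          (by norm_num) (by norm_num))
        simpa [div_eq_mul_inv] using this
      have h0 := (ENNReal.continuous_ofReal.tendsto 0).comp ht
      rw [ENNReal.ofReal_zero] at h0
      exact h0
    · refine Filter.Eventually.of_forall fun k t => ?_
      simp [Real.ediam_Icc]
    · refine Filter.Eventually.of_forall fun k x hx => ?_
      obtain ⟨t, ht, h1, h2⟩ := hT2 k x hx
      exact Set.mem_iUnion.2 ⟨⟨t, ht⟩, h1, h2⟩
  have := dimH_le_of_hausdorffMeasure_ne_top (s := X) (d := r.toNNReal)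
    (by rw [Real.coe_toNNReal r hr.le]; exact (hle.trans_lt ENNReal.one_lt_top).ne)
  exact this

lemma upper : dimH US ≤ ENNReal.ofReal (Real.log 3 / Real.log 8) := by
  have hsub : US ⊆ ⋃ q : ℕ × ℕ, (fun x : ℝ => ((q.2 : ℝ) + 2 * x) / 8 ^ q.1) '' (XL ∪ XH) := by
    intro z hz
    obtain ⟨N, m, e, he, rfl⟩ := US_tail hz
    refine Set.mem_iUnion.2 ⟨(N, m), tl e 0, ?_, rfl⟩
    rcases he.1 0 with h | h | h | h
    · exact Or.inl ⟨e, he, by simp [h], rfl⟩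
    · exact Or.inl ⟨e, he, by simp [h], rfl⟩
    · exact Or.inr ⟨e, he, by simp [h], rfl⟩
    · exact Or.inr ⟨e, he, by simp [h], rfl⟩
  refine (dimH_mono hsub).trans ?_
  rw [dimH_iUnion]
  refine iSup_le fun q => ?_
  have hlip : LipschitzWith 2 (fun x : ℝ => ((q.2 : ℝ) + 2 * x) / 8 ^ q.1) := by
    refine LipschitzWith.of_dist_le_mul fun x y => ?_
    rw [Real.dist_eq, Real.dist_eq, ← sub_div, abs_div, abs_of_pos (a := (8 : ℝ) ^ q.1) (by positivity)]
    rw [show (q.2 : ℝ) + 2 * x - (q.2 + 2 * y) = 2 * (x - y) by ring, abs_mul]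
    have h1 : (1 : ℝ) ≤ 8 ^ q.1 := one_le_pow₀ (by norm_num)
    refine (div_le_self (by positivity) h1).trans ?_
    simp
  refine (hlip.dimH_image_le _).trans ?_
  rw [dimH_union]
  exact max_le (dimH_cov fun k => (cov_all k).1) (dimH_cov fun k => (cov_all k).2)
/-- state sequence: `true` means upper half -/
def sg (t : ℕ → Fin 3) : ℕ → Bool
  | 0 => false
  | n + 1 => xor (sg t n) (t n == 1)

def en (t : ℕ → Fin 3) (n : ℕ) : ℕ :=
  if sg t n then (if t n = 0 then 5 else 7) else (if t n = 2 then 2 else 0)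

lemma en_false {t : ℕ → Fin 3} {n : ℕ} (h : sg t n = false) : en t n = 0 ∨ en t n = 2 := by
  unfold en; rw [h]; simp; tauto

lemma en_true {t : ℕ → Fin 3} {n : ℕ} (h : sg t n = true) : en t n = 5 ∨ en t n = 7 := by
  unfold en; rw [h]; simp; tauto

lemma en_Vd (t : ℕ → Fin 3) : Vd (en t) := by
  refine ⟨fun i => ?_, fun i h => ?_, fun i h => ?_⟩
  · cases hs : sg t i
    · have := en_false hs; tauto
    · have := en_true hs; tauto
  · apply en_false
    cases hs : sg t i
    · have h2 : t i = 2 := by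
        by_contra hne
        simp [en, hs, hne] at h
      simp [sg, hs, h2]
    · have := en_true hs; omega
  · apply en_true
    cases hs : sg t i
    · have := en_false hs; omega
    · have h2 : t i = 0 := by
        by_contra hne
        simp [en, hs, hne] at h
      simp [sg, hs, h2]

lemma sg_agree {s t : ℕ → Fin 3} {n : ℕ} (h : ∀ i < n, s i = t i) : sg s n = sg t n := by
  induction n with
  | zero => rfl
  | succ k ih => simp only [sg]; rw [ih fun i hi => h i (by omega), h k (by omega)]

lemma tl_en_sep {s t : ℕ → Fin 3} {n : ℕ} (hs : sg s n = sg t n) (hne : s n < t n) :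
    1 / 32 ≤ |tl (en s) n - tl (en t) n| := by
  have hS := (en_Vd s).1
  have hT := (en_Vd t).1
  rw [tl_step hS n, tl_step hT n]
  have s0 := tl_nonneg (en s) (n + 1)
  have s1 := tl_le hS (n + 1)
  have t0 := tl_nonneg (en t) (n + 1)
  have t1 := tl_le hT (n + 1)
  have hsF : sg s (n + 1) = false → tl (en s) (n + 1) ≤ 3 / 8 := fun h => lo hS (en_false h)
  have hsT : sg s (n + 1) = true → 5 / 8 ≤ tl (en s) (n + 1) := fun h => hi hS (en_true h)
  have htF : sg t (n + 1) = false → tl (en t) (n + 1) ≤ 3 / 8 := fun h => lo hT (en_false h)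
  have htT : sg t (n + 1) = true → 5 / 8 ≤ tl (en t) (n + 1) := fun h => hi hT (en_true h)
  rw [abs_sub_comm]
  refine le_trans ?_ (le_abs_self _)
  simp only [sg] at hsF hsT htF htT
  rw [hs] at hsF hsT
  clear hS hT
  generalize tl (en s) (n + 1) = x at *
  generalize tl (en t) (n + 1) = y at *
  unfold en
  rw [hs]
  clear hs
  generalize sg t n = c at *
  generalize s n = a at *
  generalize t n = b at *
  cases c <;> fin_cases a <;> fin_cases b <;> simp at * <;> linarith

lemma sep {s t : ℕ → Fin 3} {n : ℕ} (h : ∀ i < n, s i = t i) (hne : s n ≠ t n) :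
    1 / 8 ^ n ≤ 16 * |2 * tl (en s) 0 - 2 * tl (en t) 0| := by
  have h1 : 1 / 32 ≤ |tl (en s) n - tl (en t) n| := by
    rcases lt_or_gt_of_ne hne with h2 | h2
    · exact tl_en_sep (sg_agree h) h2
    · rw [abs_sub_comm]; exact tl_en_sep (sg_agree h).symm h2
  have hag : ∀ i < n, en s i = en t i := by
    intro i hi
    unfold en
    rw [h i hi, sg_agree fun j hj => h j (by omega)]
  rw [← mul_sub, tl_agree (en_Vd s).1 (en_Vd t).1 n hag, abs_mul, abs_div,
    abs_of_pos (a := (8 : ℝ) ^ n) (by positivity), abs_of_pos (a := (2 : ℝ)) (by norm_num)]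
  rw [← mul_assoc, ← mul_div_assoc]
  gcongr
  linarith

lemma holder_pt (s t : ℕ → Fin 3) : |Real.ofDigits s - Real.ofDigits t| ≤
    (16 * |2 * tl (en s) 0 - 2 * tl (en t) 0|) ^ (Real.log 3 / Real.log 8) := by
  by_cases hst : s = t
  · subst hst; simp [rpos.ne']
  · have hex : ∃ n, s n ≠ t n := Function.ne_iff.1 hst
    classical
    have hlt : ∀ i < Nat.find hex, s i = t i := fun i hi => by
      simpa using Nat.find_min hex hi
    have h1 := sep hlt (Nat.find_spec hex)
    have h2 := Real.abs_ofDigits_sub_ofDigits_le hlt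
    refine h2.trans ?_
    refine le_trans ?_ (Real.rpow_le_rpow (by positivity) h1 rpos.le)
    rw [pow_r]; simp

lemma lower : ENNReal.ofReal (Real.log 3 / Real.log 8) ≤ dimH US := by
  let g : (ℕ → Fin 3) → ℝ := fun t => 2 * tl (en t) 0
  let f : ℝ → ℝ := fun z => Real.ofDigits (Function.invFun g z)
  have hr := rpos
  have hpt := holder_pt
  set r := Real.log 3 / Real.log 8 with hrdef
  have hfg : ∀ t, f (g t) = Real.ofDigits t := by
    intro t
    have h1 : g (Function.invFun g (g t)) = g t := Function.invFun_eq ⟨t, rfl⟩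
    have h2 := hpt (Function.invFun g (g t)) t
    change |f (g t) - _| ≤ (16 * |g (Function.invFun g (g t)) - g t|) ^ r at h2
    rw [h1, sub_self, abs_zero, mul_zero, Real.zero_rpow hr.ne'] at h2
    have := abs_eq_zero.1 (le_antisymm h2 (abs_nonneg _))
    linarith
  have hhol : HolderOnWith ((16 : ℝ) ^ r).toNNReal r.toNNReal f (Set.range g) := by
    rintro _ ⟨s, rfl⟩ _ ⟨t, rfl⟩
    rw [hfg, hfg, edist_dist, edist_dist, Real.coe_toNNReal r hr.le,
      ENNReal.ofReal_rpow_of_nonneg dist_nonneg hr.le]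
    change _ ≤ ENNReal.ofReal _ * _
    rw [← ENNReal.ofReal_mul (by positivity)]
    apply ENNReal.ofReal_le_ofReal
    rw [← Real.mul_rpow (by norm_num) dist_nonneg, Real.dist_eq, Real.dist_eq]
    exact hpt s t
  have himg : Set.Icc (0 : ℝ) 1 ⊆ f '' Set.range g := by
    intro y hy
    obtain ⟨t, -, rfl⟩ := Real.ofDigits_SurjOn (b := 3) (by norm_num) hy
    exact ⟨g t, ⟨t, rfl⟩, hfg t⟩
  have h1 : (1 : ENNReal) ≤ dimH (Set.range g) / (r.toNNReal : ENNReal) := by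
    refine le_trans ?_ (hhol.dimH_image_le (Real.toNNReal_pos.2 hr))
    refine le_trans ?_ (dimH_mono himg)
    rw [Real.dimH_of_nonempty_interior (by simp)]
    simp
  have h2 : ENNReal.ofReal r ≤ dimH (Set.range g) := by
    have := (ENNReal.le_div_iff_mul_le (Or.inl (by simpa using hr)) (Or.inl (by simp))).1 h1
    rw [one_mul] at this
    exact this
  have h3 : Set.range g ⊆ US ∪ Set.range ((↑) : ℚ → ℝ) := by
    rintro _ ⟨t, rfl⟩
    by_cases hD : tl (en t) 0 ∈ Set.range ((↑) : ℚ → ℝ)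
    · obtain ⟨q, hq⟩ := hD
      exact Or.inr ⟨2 * q, by simp only [g]; rw [← hq]; push_cast; ring⟩
    · exact Or.inl (mem_US (en_Vd t) hD)
  have h4 := h2.trans (dimH_mono h3)
  rw [dimH_union, dimH_countable (Set.countable_range _)] at h4
  simpa using h4

/-- For `A = {0,2,5,7}`, `n = 8`, the uniqueness set has Hausdorff dimension
`log 3 / log 8`. -/
theorem dimH_uniqueness_0257 :
    dimH {z : ℝ | z ∈ Set.Icc (0 : ℝ) 2 ∧
      ∃! p : ℝ × ℝ, p.1 ∈ linCantor 8 {0, 2, 5, 7} ∧ p.2 ∈ linCantor 8 {0, 2, 5, 7} ∧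
        p.1 ≤ p.2 ∧ p.1 + p.2 = z} = ENNReal.ofReal (Real.log 3 / Real.log 8) := by
  exact le_antisymm upper lower
end

section
/- Let n ≥ 2 and A ⊆ {0,1,...,n-1} with 0, n-1 ∈ A, and suppose A is n-good (C_{A,n} + C_{A,n} = [0,2]). Let U_A be the set of z ∈ [0,2] with a unique unordered representation z = x + y, x, y ∈ C_{A,n}. Then either U_A = {0,2} or dim_H(U_A) ≥ log 2 / log n. -/
open MeasureTheory Pointwise

noncomputable def lcv (n : ℕ) (a : ℕ → ℕ) : ℝ := ∑' i : ℕ, (a i : ℝ) / n ^ (i + 1)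

lemma lcv_eq (n : ℕ) (a : ℕ → ℕ) (ha : ∀ i, a i < n) :
    lcv n a = Real.ofDigits (fun i => (⟨a i, ha i⟩ : Fin n)) := by
  unfold lcv Real.ofDigits Real.ofDigitsTerm
  simp [div_eq_mul_inv]

lemma lcv_nonneg (n : ℕ) (a : ℕ → ℕ) : 0 ≤ lcv n a :=
  tsum_nonneg fun i => by positivity

lemma lcv_le_one {n : ℕ} {a : ℕ → ℕ} (ha : ∀ i, a i < n) : lcv n a ≤ 1 := by
  rw [lcv_eq n a ha]; exact Real.ofDigits_le_one _

lemma lcv_shift {n : ℕ} {a : ℕ → ℕ} (ha : ∀ i, a i < n) :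
    n * lcv n a = a 0 + lcv n (fun i => a (i + 1)) := by
  have hn : (n : ℝ) ≠ 0 := by
    have := ha 0
    have : n ≠ 0 := by omega
    exact_mod_cast this
  rw [lcv_eq n a ha, lcv_eq n _ (fun i => ha (i + 1)), Real.ofDigits_eq_sum_add_ofDigits _ 1]
  simp [Real.ofDigitsTerm]
  field_simp

lemma lcv_eq_zero {n : ℕ} {a : ℕ → ℕ} (ha : ∀ i, a i < n) (h : lcv n a = 0) (i : ℕ) :
    a i = 0 := by
  induction i generalizing a with
  | zero =>
    have h1 := lcv_shift ha
    have h2 := lcv_nonneg n (fun i => a (i + 1))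
    rw [h] at h1
    have : (a 0 : ℝ) ≤ 0 := by linarith
    exact_mod_cast le_antisymm this (by positivity)
  | succ i ih =>
    have h1 := lcv_shift ha
    have h2 := lcv_nonneg n (fun i => a (i + 1))
    rw [h] at h1
    have h3 : (0 : ℝ) ≤ a 0 := by positivity
    exact ih (a := fun i => a (i + 1)) (fun i => ha _) (by linarith)

lemma lcv_eq_one {n : ℕ} {a : ℕ → ℕ} (ha : ∀ i, a i < n) (h : lcv n a = 1) (i : ℕ) :
    a i + 1 = n := by
  induction i generalizing a with
  | zero =>
    have h1 := lcv_shift ha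
    have h2 := lcv_le_one (a := fun i => a (i + 1)) (fun i => ha _)
    rw [h] at h1
    have : (n : ℝ) ≤ a 0 + 1 := by linarith
    have : n ≤ a 0 + 1 := by exact_mod_cast this
    have := ha 0
    omega
  | succ i ih =>
    have h1 := lcv_shift ha
    have h2 := lcv_le_one (a := fun i => a (i + 1)) (fun i => ha _)
    rw [h] at h1
    have h3 : (a 0 : ℝ) + 1 ≤ n := by exact_mod_cast ha 0
    exact ih (a := fun i => a (i + 1)) (fun i => ha _) (by linarith)

lemma mem_linCantor {n : ℕ} {A : Set ℕ} {x : ℝ} :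
    x ∈ linCantor n A ↔ ∃ a : ℕ → ℕ, (∀ i, a i ∈ A) ∧ x = lcv n a := Iff.rfl

section base
variable {n : ℕ} {A : Set ℕ}

lemma lc_bd (hA : ∀ a ∈ A, a < n) {x : ℝ} (hx : x ∈ linCantor n A) : 0 ≤ x ∧ x ≤ 1 := by
  obtain ⟨a, ha, rfl⟩ := hx
  exact ⟨lcv_nonneg n a, lcv_le_one (fun i => hA _ (ha i))⟩

lemma lc_cons (hA : ∀ a ∈ A, a < n) {a : ℕ} (ha : a ∈ A) {x : ℝ} (hx : x ∈ linCantor n A) :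
    ((a : ℝ) + x) / n ∈ linCantor n A := by
  obtain ⟨c, hc, rfl⟩ := hx
  have hm : ∀ i, (fun i => Nat.casesOn i a c : ℕ → ℕ) i ∈ A := by
    intro i; cases i
    · exact ha
    · exact hc _
  refine ⟨fun i => Nat.casesOn i a c, hm, ?_⟩
  have h := lcv_shift (fun i => hA _ (hm i))
  have hn : (n : ℝ) ≠ 0 := by
    have := hA _ ha
    have : n ≠ 0 := by omega
    exact_mod_cast this
  change _ = lcv n _
  rw [div_eq_iff hn, mul_comm, h]
  rfl

lemma lc_uncons (hA : ∀ a ∈ A, a < n) {x : ℝ} (hx : x ∈ linCantor n A) :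
    ∃ a ∈ A, ∃ y ∈ linCantor n A, (n : ℝ) * x = a + y := by
  obtain ⟨a, ha, rfl⟩ := hx
  exact ⟨a 0, ha 0, _, ⟨fun i => a (i + 1), fun i => ha _, rfl⟩, lcv_shift (fun i => hA _ (ha i))⟩

lemma lc_zero (h0 : 0 ∈ A) : (0 : ℝ) ∈ linCantor n A :=
  ⟨fun _ => 0, fun _ => h0, by simp⟩

lemma lc_one (hn : 2 ≤ n) (htop : n - 1 ∈ A) : (1 : ℝ) ∈ linCantor n A := by
  refine ⟨fun _ => n - 1, fun _ => htop, ?_⟩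
  change 1 = lcv n _
  rw [lcv_eq n _ (fun i => by omega)]
  exact (Real.ofDigits_const_last_eq_one' (by omega)).symm

/-- `z` has at most one unordered representation. -/
def Uq (n : ℕ) (A : Set ℕ) (z : ℝ) : Prop :=
  ∀ u ∈ linCantor n A, ∀ v ∈ linCantor n A, ∀ u' ∈ linCantor n A, ∀ v' ∈ linCantor n A,
    u + v = z → u' + v' = z → u = u' ∨ u = v'

lemma exUnique_iff (hgood : linCantor n A + linCantor n A = Set.Icc (0 : ℝ) 2) (z : ℝ) :
    (z ∈ Set.Icc (0 : ℝ) 2 ∧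
        ∃! p : ℝ × ℝ, p.1 ∈ linCantor n A ∧ p.2 ∈ linCantor n A ∧
          p.1 ≤ p.2 ∧ p.1 + p.2 = z) ↔ (z ∈ Set.Icc (0 : ℝ) 2 ∧ Uq n A z) := by
  refine and_congr_right fun hz => ⟨?_, ?_⟩
  · rintro ⟨p, -, hp⟩ u hu v hv u' hu' v' hv' h h'
    have key : ∀ u ∈ linCantor n A, ∀ v ∈ linCantor n A, u + v = z →
        (u = p.1 ∧ v = p.2) ∨ (u = p.2 ∧ v = p.1) := by
      intro u hu v hv h
      rcases le_total u v with hl | hl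
      · left
        have := hp (u, v) ⟨hu, hv, hl, h⟩
        rw [← this]; simp
      · right
        have := hp (v, u) ⟨hv, hu, hl, by simp; linarith⟩
        rw [← this]; simp
    rcases key u hu v hv h with h1 | h1 <;> rcases key u' hu' v' hv' h' with h2 | h2 <;> grind
  · intro h
    have hz' := hz
    rw [← hgood] at hz'
    obtain ⟨u, hu, v, hv, huv⟩ := Set.mem_add.1 hz'
    have main : ∀ u ∈ linCantor n A, ∀ v ∈ linCantor n A, u + v = z → u ≤ v →
        ∃! p : ℝ × ℝ, p.1 ∈ linCantor n A ∧ p.2 ∈ linCantor n A ∧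
          p.1 ≤ p.2 ∧ p.1 + p.2 = z := by
      intro u hu v hv huv hl
      refine ⟨(u, v), ⟨hu, hv, hl, huv⟩, ?_⟩
      rintro ⟨a, b⟩ ⟨ha, hb, hab, he⟩
      simp only at ha hb hab he
      rcases h u hu v hv a ha b hb huv he with h1 | h1
      · ext <;> simp <;> linarith
      · ext <;> simp <;> linarith
    rcases le_total u v with hl | hl
    · exact main u hu v hv huv hl
    · exact main v hv u hu (by linarith) hl

end base

section nec
variable {n : ℕ} {A : Set ℕ}

lemma uq_comb (hn : 2 ≤ n) (hA : ∀ a ∈ A, a < n) {z : ℝ} (hz : Uq n A z)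
    {a b a' b' : ℕ} (ha : a ∈ A) (hb : b ∈ A) (ha' : a' ∈ A) (hb' : b' ∈ A)
    {u v u' v' : ℝ} (hu : u ∈ linCantor n A) (hv : v ∈ linCantor n A)
    (hu' : u' ∈ linCantor n A) (hv' : v' ∈ linCantor n A)
    (h : (n : ℝ) * z = a + b + (u + v)) (h' : (n : ℝ) * z = a' + b' + (u' + v')) :
    (a : ℝ) + u = a' + u' ∨ (a : ℝ) + u = b' + v' := by
  have hn0 : (n : ℝ) ≠ 0 := by
    have : n ≠ 0 := by omega
    exact_mod_cast this
  have := hz _ (lc_cons hA ha hu) _ (lc_cons hA hb hv) _ (lc_cons hA ha' hu') _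
    (lc_cons hA hb' hv') (by field_simp; linarith) (by field_simp; linarith)
  rwa [div_left_inj' hn0, div_left_inj' hn0] at this

lemma uq_shift (hn : 2 ≤ n) (hA : ∀ a ∈ A, a < n) {z : ℝ} (hz : Uq n A z)
    {a b : ℕ} (ha : a ∈ A) (hb : b ∈ A) {r : ℝ} (h : (n : ℝ) * z = a + b + r) :
    Uq n A r ∧ (a = b ∨ ∀ u ∈ linCantor n A, ∀ v ∈ linCantor n A, u + v = r → u = v) := by
  have h2 : a = b ∨ ∀ u ∈ linCantor n A, ∀ v ∈ linCantor n A, u + v = r → u = v := by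
    by_cases hab : a = b
    · exact Or.inl hab
    right
    intro u hu v hv huv
    rcases uq_comb hn hA hz ha hb ha hb hu hv hv hu (by rw [huv, h]) (by rw [h]; linarith)
      with h1 | h1
    · linarith
    · exact absurd (by exact_mod_cast (by linarith : (a : ℝ) = b)) hab
  refine ⟨?_, h2⟩
  intro u hu v hv u' hu' v' hv' e e'
  rcases h2 with h2 | h2
  · subst h2
    rcases uq_comb hn hA hz ha hb ha hb hu hv hu' hv' (by rw [e, h]) (by rw [e', h]) with h1 | h1
    · left; linarith
    · right; linarith
  · have := h2 u hu v hv e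
    have := h2 u' hu' v' hv' e'
    left; linarith

lemma one_not_uq (hn : 2 ≤ n) (hA : ∀ a ∈ A, a < n) (h0 : 0 ∈ A) (htop : n - 1 ∈ A) :
    ¬ Uq n A 1 := by
  intro h
  have hn' : (2 : ℝ) ≤ n := by exact_mod_cast hn
  have h1 : ((0 : ℕ) + 1 : ℝ) / n ∈ linCantor n A := lc_cons hA h0 (lc_one hn htop)
  have h2 : ((n - 1 : ℕ) + 0 : ℝ) / n ∈ linCantor n A := lc_cons hA htop (lc_zero h0)
  have h3 : ((n - 1 : ℕ) : ℝ) = n - 1 := by push_cast [Nat.cast_sub (by omega : 1 ≤ n)]; ring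
  rw [h3] at h2
  rcases h _ h1 _ h2 _ (lc_zero h0) _ (lc_one hn htop) (by push_cast; field_simp; ring) (by norm_num)
    with h4 | h4
  · have : (0 : ℝ) < ((0 : ℕ) + 1 : ℝ) / n := by push_cast; positivity
    linarith
  · rw [div_eq_iff (by positivity)] at h4
    push_cast at h4
    linarith

lemma uq_sep2 (hn : 2 ≤ n) (hA : ∀ a ∈ A, a < n) (h0 : 0 ∈ A) (htop : n - 1 ∈ A)
    {z : ℝ} (hz : Uq n A z) {a b : ℕ} (ha : a ∈ A) (hb : b ∈ A) (hb' : b + 1 ∈ A)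
    {u : ℝ} (hu : u ∈ linCantor n A) (h : (n : ℝ) * z = a + b + (u + 1)) : False := by
  have h' : (n : ℝ) * z = a + (b + 1 : ℕ) + u := by push_cast; linarith
  obtain ⟨q1, e1⟩ := uq_shift hn hA hz ha hb h
  obtain ⟨q2, e2⟩ := uq_shift hn hA hz ha hb' h'
  have one := one_not_uq hn hA h0 htop
  rcases e1 with e1 | e1
  · rcases e2 with e2 | e2
    · omega
    · have := e2 u hu 0 (lc_zero h0) (by ring)
      subst this
      exact one (by simpa using q1)
  · have := e1 u hu 1 (lc_one hn htop) rfl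
    subst this
    exact one q2

lemma uq_sep1 (hn : 2 ≤ n) (hA : ∀ a ∈ A, a < n) (h0 : 0 ∈ A) (htop : n - 1 ∈ A)
    {z : ℝ} (hz : Uq n A z)
    {a b a' b' : ℕ} (ha : a ∈ A) (hb : b ∈ A) (ha' : a' ∈ A) (hb' : b' ∈ A)
    {u v u' v' : ℝ} (hu : u ∈ linCantor n A) (hv : v ∈ linCantor n A)
    (hu' : u' ∈ linCantor n A) (hv' : v' ∈ linCantor n A)
    (h : (n : ℝ) * z = a + b + (u + v))
    (e1 : (a : ℝ) + u = a' + u') (e2 : (b : ℝ) + v = b' + v') : ¬ a + b < a' + b' := by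
  intro hlt
  have bu := lc_bd hA hu
  have bv := lc_bd hA hv
  have bu' := lc_bd hA hu'
  have bv' := lc_bd hA hv'
  have i1 : a' ≤ a + 1 := by
    have : (a' : ℝ) ≤ a + 1 := by linarith
    exact_mod_cast this
  have i2 : b' ≤ b + 1 := by
    have : (b' : ℝ) ≤ b + 1 := by linarith
    exact_mod_cast this
  have : (a' = a + 1 ∧ b' = b + 1) ∨ (a' = a ∧ b' = b + 1) ∨ (a' = a + 1 ∧ b' = b) := by omega
  rcases this with ⟨rfl, rfl⟩ | ⟨rfl, rfl⟩ | ⟨rfl, rfl⟩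
  · push_cast at e1 e2
    have : u = 1 := by linarith
    have : v = 1 := by linarith
    exact one_not_uq hn hA h0 htop (uq_shift hn hA hz ha' hb (r := 1) (by push_cast; linarith)).1
  · push_cast at e1 e2
    have : v = 1 := by linarith
    exact uq_sep2 hn hA h0 htop hz ha hb hb' hu (by linarith)
  · push_cast at e1 e2
    have : u = 1 := by linarith
    exact uq_sep2 hn hA h0 htop hz hb ha ha' hv (by linarith)

lemma uq_sep (hn : 2 ≤ n) (hA : ∀ a ∈ A, a < n) (h0 : 0 ∈ A) (htop : n - 1 ∈ A)
    (hgood : linCantor n A + linCantor n A = Set.Icc (0 : ℝ) 2)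
    {z : ℝ} (hz : Uq n A z)
    {a b a' b' : ℕ} (ha : a ∈ A) (hb : b ∈ A) (ha' : a' ∈ A) (hb' : b' ∈ A)
    {r r' : ℝ} (hr : r ∈ Set.Icc (0 : ℝ) 2) (hr' : r' ∈ Set.Icc (0 : ℝ) 2)
    (h : (n : ℝ) * z = a + b + r) (h' : (n : ℝ) * z = a' + b' + r') : a + b = a' + b' := by
  rw [← hgood] at hr hr'
  obtain ⟨u, hu, v, hv, rfl⟩ := Set.mem_add.1 hr
  obtain ⟨u', hu', v', hv', rfl⟩ := Set.mem_add.1 hr'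
  rcases uq_comb hn hA hz ha hb ha' hb' hu hv hu' hv' h h' with e | e
  · have e2 : (b : ℝ) + v = b' + v' := by linarith
    have k1 := uq_sep1 hn hA h0 htop hz ha hb ha' hb' hu hv hu' hv' h e e2
    have k2 := uq_sep1 hn hA h0 htop hz ha' hb' ha hb hu' hv' hu hv h' e.symm e2.symm
    omega
  · have e2 : (b : ℝ) + v = a' + u' := by linarith
    have k1 := uq_sep1 hn hA h0 htop hz ha hb hb' ha' hu hv hv' hu' h e e2
    have k2 := uq_sep1 hn hA h0 htop hz hb' ha' ha hb hv' hu' hu hv (by linarith) e.symm e2.symm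
    omega

lemma good_gap (hn : 2 ≤ n) (hA : ∀ a ∈ A, a < n)
    (hgood : linCantor n A + linCantor n A = Set.Icc (0 : ℝ) 2) (j : ℕ) (hj : j + 3 ≤ 2 * n) :
    ∃ a ∈ A, ∃ b ∈ A, a + b = j ∨ a + b = j + 1 := by
  have hn' : (2 : ℝ) ≤ n := by exact_mod_cast hn
  have hj' : (j : ℝ) + 3 ≤ 2 * n := by exact_mod_cast hj
  have : ((j : ℝ) + 3 / 2) / n ∈ linCantor n A + linCantor n A := by
    rw [hgood]
    constructor
    · positivity
    · rw [div_le_iff₀ (by positivity)]; linarith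
  obtain ⟨x, hx, y, hy, hxy⟩ := Set.mem_add.1 this
  obtain ⟨a, ha, u, hu, e1⟩ := lc_uncons hA hx
  obtain ⟨b, hb, v, hv, e2⟩ := lc_uncons hA hy
  have bu := lc_bd hA hu
  have bv := lc_bd hA hv
  rw [eq_div_iff (by positivity)] at hxy
  have e3 : (a : ℝ) + b + (u + v) = j + 3 / 2 := by linarith
  refine ⟨a, ha, b, hb, ?_⟩
  have l1 : a + b < j + 2 := by
    have : (a : ℝ) + b < j + 2 := by linarith
    exact_mod_cast this
  have l2 : j < a + b + 1 := by
    have : (j : ℝ) < a + b + 1 := by linarith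
    exact_mod_cast this
  omega

lemma uq_inner (hn : 2 ≤ n) (hA : ∀ a ∈ A, a < n) (h0 : 0 ∈ A) (htop : n - 1 ∈ A)
    (hgood : linCantor n A + linCantor n A = Set.Icc (0 : ℝ) 2)
    {z : ℝ} (hz : Uq n A z) (hz0 : z ≠ 0) (hz2 : z ≠ 2)
    {a b : ℕ} (ha : a ∈ A) (hb : b ∈ A) {r : ℝ}
    (h : (n : ℝ) * z = a + b + r) : Uq n A r ∧ r ≠ 0 ∧ r ≠ 2 ∧ r ≠ 1 := by
  have hn' : (2 : ℝ) ≤ n := by exact_mod_cast hn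
  have hq := (uq_shift hn hA hz ha hb h).1
  have la := hA a ha
  have lb := hA b hb
  refine ⟨hq, ?_, ?_, ?_⟩
  · rintro rfl
    have key : ∀ p ∈ A, ∀ q ∈ A, ¬ (p + q + 1 = a + b) ∧ ¬ (p + q + 2 = a + b) := by
      intro p hp q hq
      constructor
      · intro e
        have e' : (p : ℝ) + q + 1 = a + b := by exact_mod_cast e
        have := uq_sep hn hA h0 htop hgood hz ha hb hp hq (r := 0) (r' := 1) (by simp)
          (by norm_num) h (by linarith)
        omega
      · intro e
        have e' : (p : ℝ) + q + 2 = a + b := by exact_mod_cast e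
        have := uq_sep hn hA h0 htop hgood hz ha hb hp hq (r := 0) (r' := 2) (by simp)
          (by norm_num) h (by linarith)
        omega
    rcases Nat.lt_or_ge (a + b) 2 with hs | hs
    · have : a + b = 0 ∨ 0 + 0 + 1 = a + b := by omega
      rcases this with e | e
      · have : (a : ℝ) + b = 0 := by exact_mod_cast e
        rw [this] at h
        simp at h
        rcases h with h | h
        · omega
        · exact hz0 h
      · exact (key 0 h0 0 h0).1 e
    · obtain ⟨p, hp, q, hq, e⟩ := good_gap hn hA hgood (a + b - 2) (by omega)
      have := key p hp q hq
      omega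
  · rintro rfl
    have key : ∀ p ∈ A, ∀ q ∈ A, ¬ (p + q = a + b + 1) ∧ ¬ (p + q = a + b + 2) := by
      intro p hp q hq
      constructor
      · intro e
        have e' : (p : ℝ) + q = a + b + 1 := by exact_mod_cast e
        have := uq_sep hn hA h0 htop hgood hz ha hb hp hq (r := 2) (r' := 1) (by simp)
          (by norm_num) h (by linarith)
        omega
      · intro e
        have e' : (p : ℝ) + q = a + b + 2 := by exact_mod_cast e
        have := uq_sep hn hA h0 htop hgood hz ha hb hp hq (r := 2) (r' := 0) (by simp)
          (by norm_num) h (by linarith)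
        omega
    rcases Nat.lt_or_ge (a + b + 3) (2 * n) with hs | hs
    · obtain ⟨p, hp, q, hq, e⟩ := good_gap hn hA hgood (a + b + 1) (by omega)
      have := key p hp q hq
      omega
    · have : a + b + 2 = 2 * n ∨ (n - 1) + (n - 1) = a + b + 1 := by omega
      rcases this with e | e
      · have : (a : ℝ) + b + 2 = 2 * n := by exact_mod_cast e
        apply hz2
        have h5 : (n : ℝ) * z = n * 2 := by linarith
        exact mul_left_cancel₀ (by positivity) h5
      · exact (key _ htop _ htop).1 e
  · rintro rfl
    exact one_not_uq hn hA h0 htop hq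

lemma exists_diag (hn : 2 ≤ n) (hA : ∀ a ∈ A, a < n) (h0 : 0 ∈ A) (htop : n - 1 ∈ A)
    (hgood : linCantor n A + linCantor n A = Set.Icc (0 : ℝ) 2)
    {z : ℝ} (hzI : z ∈ Set.Icc (0 : ℝ) 2) (hz : Uq n A z) (hz0 : z ≠ 0) (hz2 : z ≠ 2) :
    ∃ c : ℕ → ℕ, (∀ i, c i ∈ A) ∧ Uq n A (2 * lcv n c) ∧ 2 * lcv n c ≠ 0 ∧ 2 * lcv n c ≠ 2 := by
  rw [← hgood] at hzI
  obtain ⟨x, ⟨a, ha, hxa⟩, y, ⟨b, hb, hyb⟩, rfl⟩ := Set.mem_add.1 hzI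
  change x = lcv n a at hxa
  change y = lcv n b at hyb
  have step : ∀ k, (n : ℝ) * (lcv n (fun i => a (i + k)) + lcv n (fun i => b (i + k))) =
      a k + b k + (lcv n (fun i => a (i + (k + 1))) + lcv n (fun i => b (i + (k + 1)))) := by
    intro k
    have e1 := lcv_shift (a := fun i => a (i + k)) (fun i => hA _ (ha (i + k)))
    have e2 := lcv_shift (a := fun i => b (i + k)) (fun i => hA _ (hb (i + k)))
    simp only [zero_add, add_assoc, add_comm 1] at e1 e2
    rw [mul_add, e1, e2]; ring
  have tails : ∀ k, Uq n A (lcv n (fun i => a (i + k)) + lcv n (fun i => b (i + k))) ∧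
      lcv n (fun i => a (i + k)) + lcv n (fun i => b (i + k)) ≠ 0 ∧
      lcv n (fun i => a (i + k)) + lcv n (fun i => b (i + k)) ≠ 2 := by
    intro k
    induction k with
    | zero => simp only [add_zero]; rw [← hxa, ← hyb]; exact ⟨hz, hz0, hz2⟩
    | succ k ih =>
      have := uq_inner hn hA h0 htop hgood ih.1 ih.2.1 ih.2.2 (ha k) (hb k) (step k)
      exact ⟨this.1, this.2.1, this.2.2.1⟩
  by_cases hab : ∀ k, a k = b k
  · have : a = b := funext hab
    subst this
    have e : x + y = 2 * lcv n a := by rw [hxa, hyb]; ring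
    rw [e] at hz hz0 hz2
    exact ⟨a, ha, hz, hz0, hz2⟩
  · push Not at hab
    obtain ⟨k, hk⟩ := hab
    rcases (uq_shift hn hA (tails k).1 (ha k) (hb k) (step k)).2 with h | h
    · exact absurd h hk
    · have e := h _ ⟨fun i => a (i + (k + 1)), fun i => ha _, rfl⟩ _
        ⟨fun i => b (i + (k + 1)), fun i => hb _, rfl⟩ rfl
      change lcv n (fun i => a (i + (k + 1))) = lcv n (fun i => b (i + (k + 1))) at e
      have t := tails (k + 1)
      rw [← e, ← two_mul] at t
      exact ⟨_, fun i => ha _, t⟩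

def DD (A : Set ℕ) (a : ℕ) : Prop := a ∈ A ∧ ∀ p ∈ A, ∀ q ∈ A, p + q = 2 * a → p = q
def LL (A : Set ℕ) (a : ℕ) : Prop := ∀ p ∈ A, ∀ q ∈ A, p + q + 1 ≠ 2 * a
def RR (A : Set ℕ) (a : ℕ) : Prop := ∀ p ∈ A, ∀ q ∈ A, p + q ≠ 2 * a + 1

lemma diag_struct (hn : 2 ≤ n) (hA : ∀ a ∈ A, a < n) (h0 : 0 ∈ A) (htop : n - 1 ∈ A)
    (hgood : linCantor n A + linCantor n A = Set.Icc (0 : ℝ) 2)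
    {c : ℕ → ℕ} (hc : ∀ i, c i ∈ A) (hq : Uq n A (2 * lcv n c)) (hq0 : 2 * lcv n c ≠ 0)
    (hq2 : 2 * lcv n c ≠ 2) :
    DD A (c 0) ∧ Uq n A (2 * lcv n (fun i => c (i + 1))) ∧
    2 * lcv n (fun i => c (i + 1)) ≠ 0 ∧ 2 * lcv n (fun i => c (i + 1)) ≠ 2 ∧
    ((lcv n (fun i => c (i + 1)) < 1 / 2 ∧ LL A (c 0)) ∨
      (1 / 2 < lcv n (fun i => c (i + 1)) ∧ RR A (c 0))) ∧
    (lcv n c < 1 / 2 → 2 * c 0 + 2 ≤ n) ∧ (1 / 2 < lcv n c → n ≤ 2 * c 0) := by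
  have e := lcv_shift (fun i => hA _ (hc i))
  have bd : 0 ≤ lcv n (fun i => c (i + 1)) ∧ lcv n (fun i => c (i + 1)) ≤ 1 :=
    ⟨lcv_nonneg _ _, lcv_le_one (fun i => hA _ (hc _))⟩
  have mem : lcv n (fun i => c (i + 1)) ∈ linCantor n A := ⟨_, fun i => hc _, rfl⟩
  have memc : lcv n c ∈ linCantor n A := ⟨_, fun i => hc _, rfl⟩
  generalize lcv n (fun i => c (i + 1)) = t at *
  have hn' : (2 : ℝ) ≤ n := by exact_mod_cast hn
  have e2 : (n : ℝ) * (2 * lcv n c) = c 0 + c 0 + 2 * t := by linarith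
  obtain ⟨i1, i2, i3, i4⟩ := uq_inner hn hA h0 htop hgood hq hq0 hq2 (hc 0) (hc 0) e2
  have hD : DD A (c 0) := by
    refine ⟨hc 0, fun p hp q hq' hpq => ?_⟩
    have hpq' : (p : ℝ) + q = 2 * c 0 := by exact_mod_cast hpq
    rcases uq_comb hn hA hq hp hq' (hc 0) (hc 0) mem mem mem mem (by linarith) (by linarith)
      with h | h
    · have : p = c 0 := by exact_mod_cast (by linarith : (p : ℝ) = c 0)
      omega
    · have : p = c 0 := by exact_mod_cast (by linarith : (p : ℝ) = c 0)
      omega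
  have hne : 2 * c 0 + 1 ≠ n := by
    intro h
    have := hD.2 0 h0 (n - 1) htop (by omega)
    omega
  refine ⟨hD, i1, i2, i3, ?_, ?_, ?_⟩
  · rcases lt_trichotomy t (1 / 2) with h | h | h
    · left
      refine ⟨h, fun p hp q hq' hpq => ?_⟩
      have hpq' : (p : ℝ) + q + 1 = 2 * c 0 := by exact_mod_cast hpq
      have := uq_sep hn hA h0 htop hgood hq (hc 0) (hc 0) hp hq' (r := 2 * t) (r' := 2 * t + 1)
        ⟨by linarith, by linarith⟩ ⟨by linarith, by linarith⟩ e2 (by linarith)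
      omega
    · exact absurd (by linarith) i4
    · right
      refine ⟨h, fun p hp q hq' hpq => ?_⟩
      have hpq' : (p : ℝ) + q = 2 * c 0 + 1 := by exact_mod_cast hpq
      have := uq_sep hn hA h0 htop hgood hq (hc 0) (hc 0) hp hq' (r := 2 * t) (r' := 2 * t - 1)
        ⟨by linarith, by linarith⟩ ⟨by linarith, by linarith⟩ e2 (by linarith)
      omega
  · intro h
    have : (2 : ℝ) * c 0 < n := by nlinarith
    have : 2 * c 0 < n := by exact_mod_cast this
    omega
  · intro h
    have : (n : ℝ) < 2 * c 0 + 2 := by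
      have : t ≠ 1 := fun h => i3 (by linarith)
      have : t < 1 := lt_of_le_of_ne bd.2 this
      nlinarith
    have : n < 2 * c 0 + 2 := by exact_mod_cast this
    omega

/-- Coding data: two letters types. -/
def Coding (n : ℕ) (A : Set ℕ) (l : Fin 2 → Fin 2 → ℕ) (h : Fin 2 → Prop) : Prop :=
  (∀ s t, DD A (l s t) ∧ (h s → n ≤ 2 * l s t) ∧ (¬ h s → 2 * l s t + 2 ≤ n) ∧
    (h t → RR A (l s t)) ∧ (¬ h t → LL A (l s t))) ∧ ∀ s t s' t', s ≠ s' → l s t ≠ l s' t'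

lemma exists_coding (hn : 2 ≤ n) (hA : ∀ a ∈ A, a < n) (h0 : 0 ∈ A) (htop : n - 1 ∈ A)
    (hgood : linCantor n A + linCantor n A = Set.Icc (0 : ℝ) 2)
    {c : ℕ → ℕ} (hc : ∀ i, c i ∈ A) (hq : Uq n A (2 * lcv n c)) (hq0 : 2 * lcv n c ≠ 0)
    (hq2 : 2 * lcv n c ≠ 2) : ∃ l h, Coding n A l h := by
  have D0 : DD A 0 := ⟨h0, fun p _ q _ h => by omega⟩
  have L0 : LL A 0 := fun p _ q _ h => by omega
  have D1 : DD A (n - 1) := ⟨htop, fun p hp q hq h => by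
    have := hA p hp; have := hA q hq; omega⟩
  have R1 : RR A (n - 1) := fun p hp q hq h => by
    have := hA p hp; have := hA q hq; omega
  have c1 : ∀ a, a ≠ 0 → DD A a → LL A a → 2 * a + 2 ≤ n → ∃ l h, Coding n A l h := by
    intro a ha hD hL hl
    refine ⟨fun s _ => if s = 0 then 0 else a, fun _ => False, ?_, ?_⟩
    · intro s t
      by_cases hs : s = 0 <;> simp [hs, D0, L0, hD, hL, hl, hn]
    · intro s t s' t' hs
      fin_cases s <;> fin_cases s' <;> simp_all <;> omega
  have c2 : ∀ a, a ≠ n - 1 → DD A a → RR A a → n ≤ 2 * a → ∃ l h, Coding n A l h := by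
    intro a ha hD hR hl
    refine ⟨fun s _ => if s = 0 then n - 1 else a, fun _ => True, ?_, ?_⟩
    · intro s t
      have : n ≤ 2 * (n - 1) := by omega
      by_cases hs : s = 0 <;> simp [hs, D1, R1, hD, hR, hl, this]
    · intro s t s' t' hs
      fin_cases s <;> fin_cases s' <;> simp_all <;> omega
  have c3 : ∀ a b, DD A a → RR A a → 2 * a + 2 ≤ n → DD A b → LL A b → n ≤ 2 * b →
      ∃ l h, Coding n A l h := by
    intro a b Da Ra la Db Lb lb
    refine ⟨fun s t => if s = 0 then (if t = 0 then 0 else a) else (if t = 0 then b else n - 1),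
      fun s => s = 1, ?_, ?_⟩
    · intro s t
      have : n ≤ 2 * (n - 1) := by omega
      fin_cases s <;> fin_cases t <;> simp [D0, D1, L0, R1, *]
    · intro s t s' t' hs
      fin_cases s <;> fin_cases s' <;> fin_cases t <;> fin_cases t' <;> simp_all <;> omega
  have tails : ∀ k, Uq n A (2 * lcv n (fun i => c (i + k))) ∧
      2 * lcv n (fun i => c (i + k)) ≠ 0 ∧ 2 * lcv n (fun i => c (i + k)) ≠ 2 := by
    intro k
    induction k with
    | zero => exact ⟨hq, hq0, hq2⟩
    | succ k ih =>
      have := diag_struct hn hA h0 htop hgood (fun i => hc (i + k)) ih.1 ih.2.1 ih.2.2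
      simp only [add_assoc, add_comm 1] at this
      exact ⟨this.2.1, this.2.2.1, this.2.2.2.1⟩
  have st : ∀ k, DD A (c k) ∧ ((lcv n (fun i => c (i + (k + 1))) < 1 / 2 ∧ LL A (c k)) ∨
      (1 / 2 < lcv n (fun i => c (i + (k + 1))) ∧ RR A (c k))) ∧
      (lcv n (fun i => c (i + k)) < 1 / 2 → 2 * c k + 2 ≤ n) ∧
      (1 / 2 < lcv n (fun i => c (i + k)) → n ≤ 2 * c k) := by
    intro k
    have := diag_struct hn hA h0 htop hgood (fun i => hc (i + k)) (tails k).1 (tails k).2.1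
      (tails k).2.2
    simp only [add_assoc, add_comm 1, zero_add] at this
    exact ⟨this.1, this.2.2.2.2⟩
  have ne0 : ∀ k, ∃ i, k ≤ i ∧ c i ≠ 0 := by
    intro k
    by_contra hcon
    push Not at hcon
    apply (tails k).2.1
    have : (fun i => c (i + k)) = fun _ => 0 := funext fun i => hcon _ (by omega)
    rw [this]; simp [lcv]
  have ne1 : ∀ k, ∃ i, k ≤ i ∧ c i ≠ n - 1 := by
    intro k
    by_contra hcon
    push Not at hcon
    apply (tails k).2.2
    have : (fun i => c (i + k)) = fun _ => n - 1 := funext fun i => hcon _ (by omega)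
    rw [this, lcv_eq n _ (fun i => by omega), Real.ofDigits_const_last_eq_one' (by omega)]
    norm_num
  clear tails
  generalize hT : (fun k => lcv n (fun i => c (i + k))) = T at *
  have hT' : ∀ k, lcv n (fun i => c (i + k)) = T k := fun k => by rw [← hT]
  simp only [hT'] at st
  by_contra hcon
  have lowstep : ∀ k, T (k + 1) < 1 / 2 → LL A (c k) := fun k h => by
    rcases (st k).2.1 with h' | h'
    · exact h'.2
    · linarith [h'.1]
  have highstep : ∀ k, 1 / 2 < T (k + 1) → RR A (c k) := fun k h => by
    rcases (st k).2.1 with h' | h'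
    · linarith [h'.1]
    · exact h'.2
  have dich : ∀ k, T (k + 1) < 1 / 2 ∨ 1 / 2 < T (k + 1) := fun k => by
    rcases (st k).2.1 with h' | h'
    · exact Or.inl h'.1
    · exact Or.inr h'.1
  have noLow : ∀ k, ¬ ∀ i, k ≤ i → T i < 1 / 2 := by
    intro k hk
    obtain ⟨i, hi, hne⟩ := ne0 k
    exact hcon (c1 _ hne (st i).1 (lowstep i (hk _ (by omega))) ((st i).2.2.1 (hk i hi)))
  have noHigh : ∀ k, ¬ ∀ i, k ≤ i → 1 / 2 < T i := by
    intro k hk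
    obtain ⟨i, hi, hne⟩ := ne1 k
    exact hcon (c2 _ hne (st i).1 (highstep i (hk _ (by omega))) ((st i).2.2.2 (hk i hi)))
  have up : ∃ k, T k < 1 / 2 ∧ 1 / 2 < T (k + 1) := by
    by_contra hno
    push Not at hno
    have pers : ∀ k, T k < 1 / 2 → ∀ i, k ≤ i → T i < 1 / 2 := by
      intro k hk i hi
      induction i, hi using Nat.le_induction with
      | base => exact hk
      | succ i hi ih => rcases dich i with h | h
                        · exact h
                        · linarith [hno i ih]
    apply noHigh 1
    intro i hi
    obtain ⟨i, rfl⟩ : ∃ j, i = j + 1 := ⟨i - 1, by omega⟩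
    rcases dich i with h | h
    · exact absurd (pers _ h) (noLow _)
    · exact h
  have down : ∃ k, 1 / 2 < T k ∧ T (k + 1) < 1 / 2 := by
    by_contra hno
    push Not at hno
    have pers : ∀ k, 1 / 2 < T k → ∀ i, k ≤ i → 1 / 2 < T i := by
      intro k hk i hi
      induction i, hi using Nat.le_induction with
      | base => exact hk
      | succ i hi ih => rcases dich i with h | h
                        · linarith [hno i ih]
                        · exact h
    apply noLow 1
    intro i hi
    obtain ⟨i, rfl⟩ : ∃ j, i = j + 1 := ⟨i - 1, by omega⟩
    rcases dich i with h | h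
    · exact h
    · exact absurd (pers _ h) (noHigh _)
  obtain ⟨k, k1, k2⟩ := up
  obtain ⟨m, m1, m2⟩ := down
  exact hcon (c3 (c k) (c m) (st k).1 (highstep k k2) ((st k).2.2.1 k1) (st m).1
    (lowstep m m2) ((st m).2.2.2 m1))

end nec

section suff
variable {n : ℕ} {A : Set ℕ} {l : Fin 2 → Fin 2 → ℕ} {h : Fin 2 → Prop}

def NC (τ : ℕ → Fin 2) : Prop := ∀ s k, ∃ i, k ≤ i ∧ τ i = s

def dig (l : Fin 2 → Fin 2 → ℕ) (τ : ℕ → Fin 2) : ℕ → ℕ := fun i => l (τ i) (τ (i + 1))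

lemma NC.shift {τ : ℕ → Fin 2} (hτ : NC τ) : NC (fun i => τ (i + 1)) := by
  intro s k
  obtain ⟨i, hi, e⟩ := hτ s (k + 1)
  exact ⟨i - 1, by omega, by simpa [Nat.sub_add_cancel (by omega : 1 ≤ i)] using e⟩

lemma dig_lt (hA : ∀ a ∈ A, a < n) (hC : Coding n A l h) (τ : ℕ → Fin 2) (i : ℕ) :
    dig l τ i < n := hA _ (hC.1 _ _).1.1

lemma dig_shift (hA : ∀ a ∈ A, a < n) (hC : Coding n A l h) (τ : ℕ → Fin 2) :
    (n : ℝ) * lcv n (dig l τ) = l (τ 0) (τ 1) + lcv n (dig l (fun i => τ (i + 1))) :=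
  lcv_shift (dig_lt hA hC τ)

lemma dig_pos (hA : ∀ a ∈ A, a < n) (hC : Coding n A l h) {τ : ℕ → Fin 2}
    (hτ : NC τ) : 0 < lcv n (dig l τ) ∧ lcv n (dig l τ) < 1 := by
  obtain ⟨i, -, hi⟩ := hτ 0 0
  obtain ⟨j, -, hj⟩ := hτ 1 0
  have hne : dig l τ i ≠ dig l τ j := hC.2 _ _ _ _ (by rw [hi, hj]; decide)
  constructor
  · refine lt_of_le_of_ne (lcv_nonneg _ _) fun e => ?_
    have h1 := lcv_eq_zero (dig_lt hA hC τ) e.symm i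
    have h2 := lcv_eq_zero (dig_lt hA hC τ) e.symm j
    omega
  · refine lt_of_le_of_ne (lcv_le_one (dig_lt hA hC τ)) fun e => ?_
    have h1 := lcv_eq_one (dig_lt hA hC τ) e i
    have h2 := lcv_eq_one (dig_lt hA hC τ) e j
    omega

lemma dig_half (hA : ∀ a ∈ A, a < n) (hC : Coding n A l h) {τ : ℕ → Fin 2}
    (hτ : NC τ) : (h (τ 0) → 1 / 2 < lcv n (dig l τ)) ∧ (¬ h (τ 0) → lcv n (dig l τ) < 1 / 2) := by
  have e := dig_shift hA hC τ
  have p := dig_pos hA hC hτ.shift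
  have q := dig_pos hA hC hτ
  have hC1 := hC.1 (τ 0) (τ 1)
  have hn : (0 : ℝ) < n := by
    have := dig_lt hA hC τ 0
    exact_mod_cast (by omega : 0 < n)
  constructor
  · intro hh
    have : (n : ℝ) ≤ 2 * l (τ 0) (τ 1) := by exact_mod_cast hC1.2.1 hh
    nlinarith
  · intro hh
    have : 2 * (l (τ 0) (τ 1) : ℝ) + 2 ≤ n := by exact_mod_cast hC1.2.2.1 hh
    nlinarith

lemma dig_uniq_aux (hn : 2 ≤ n) (hA : ∀ a ∈ A, a < n) (hC : Coding n A l h) (k : ℕ) :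
    ∀ (τ : ℕ → Fin 2), NC τ → ∀ u ∈ linCantor n A, ∀ v ∈ linCantor n A,
    u + v = 2 * lcv n (dig l τ) → |u - lcv n (dig l τ)| ≤ (1 / 2) ^ k := by
  have hn' : (2 : ℝ) ≤ n := by exact_mod_cast hn
  induction k with
  | zero =>
    intro τ hτ u hu v hv huv
    have := lc_bd hA hu
    have := dig_pos hA hC hτ
    rw [abs_le]
    constructor <;> simp <;> linarith
  | succ k ih =>
    intro τ hτ u hu v hv huv
    obtain ⟨a, ha, u1, hu1, e1⟩ := lc_uncons hA hu
    obtain ⟨b, hb, v1, hv1, e2⟩ := lc_uncons hA hv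
    have e := dig_shift hA hC τ
    have p := dig_pos hA hC hτ.shift
    have hC1 := hC.1 (τ 0) (τ 1)
    have hf := dig_half hA hC hτ.shift
    simp only [zero_add] at hf
    have bu := lc_bd hA hu1
    have bv := lc_bd hA hv1
    have ihk := ih _ hτ.shift u1 hu1 v1 hv1
    generalize lcv n (dig l (fun i => τ (i + 1))) = t at *
    generalize l (τ 0) (τ 1) = d at *
    have e3 : (a : ℝ) + b + (u1 + v1) = 2 * d + 2 * t := by
      have : (n : ℝ) * (u + v) = n * (2 * lcv n (dig l τ)) := by rw [huv]
      linarith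
    have l1 : a + b < 2 * d + 2 := by
      have : (a : ℝ) + b < 2 * d + 2 := by linarith
      exact_mod_cast this
    have l2 : 2 * d < a + b + 2 := by
      have : 2 * (d : ℝ) < a + b + 2 := by linarith
      exact_mod_cast this
    have hab : a + b = 2 * d := by
      by_cases hh : h (τ 1)
      · have t1 := hf.1 hh
        have r1 := hC1.2.2.2.1 hh a ha b hb
        have : 2 * d < a + b + 1 := by
          have : 2 * (d : ℝ) < a + b + 1 := by linarith
          exact_mod_cast this
        omega
      · have t1 := hf.2 hh
        have r1 := hC1.2.2.2.2 hh a ha b hb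
        have : a + b < 2 * d + 1 := by
          have : (a : ℝ) + b < 2 * d + 1 := by linarith
          exact_mod_cast this
        omega
    have hab2 := hC1.1.2 a ha b hb hab
    have had : a = d := by omega
    subst hab2
    subst had
    have := ihk (by linarith)
    have e5 : (n : ℝ) * (u - lcv n (dig l τ)) = u1 - t := by linarith
    have e6 : (n : ℝ) * |u - lcv n (dig l τ)| = |u1 - t| := by
      rw [← e5, abs_mul, abs_of_nonneg (by linarith : (0 : ℝ) ≤ n)]
    rw [pow_succ]
    nlinarith [abs_nonneg (u - lcv n (dig l τ))]

lemma dig_uniq (hn : 2 ≤ n) (hA : ∀ a ∈ A, a < n) (hC : Coding n A l h)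
    {τ : ℕ → Fin 2} (hτ : NC τ) : Uq n A (2 * lcv n (dig l τ)) := by
  have key : ∀ u ∈ linCantor n A, ∀ v ∈ linCantor n A,
    u + v = 2 * lcv n (dig l τ) → u = lcv n (dig l τ) := by
    intro u hu v hv huv
    by_contra hne
    have hpos : 0 < |u - lcv n (dig l τ)| := abs_pos.2 (sub_ne_zero.2 hne)
    obtain ⟨k, hk⟩ := exists_pow_lt_of_lt_one hpos (by norm_num : (1 / 2 : ℝ) < 1)
    have := dig_uniq_aux hn hA hC k τ hτ u hu v hv huv
    linarith
  intro u hu v hv u' hu' v' hv' e e'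
  left
  rw [key u hu v hv e, key u' hu' v' hv' e']

lemma dig_sep0 (hA : ∀ a ∈ A, a < n) (hC : Coding n A l h) {τ τ' : ℕ → Fin 2}
    (hτ : NC τ) (hτ' : NC τ') (hlt : dig l τ 0 < dig l τ' 0) :
    1 ≤ (n : ℝ) * (lcv n (dig l τ') - lcv n (dig l τ)) := by
  have e := dig_shift hA hC τ
  have e' := dig_shift hA hC τ'
  have p := dig_pos hA hC hτ.shift
  have p' := dig_pos hA hC hτ'.shift
  have f := dig_half hA hC hτ.shift
  have f' := dig_half hA hC hτ'.shift
  have C1 := hC.1 (τ 0) (τ 1)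
  have C1' := hC.1 (τ' 0) (τ' 1)
  simp only [zero_add] at f f'
  change l (τ 0) (τ 1) < l (τ' 0) (τ' 1) at hlt
  generalize l (τ 0) (τ 1) = d at *
  generalize l (τ' 0) (τ' 1) = d' at *
  rw [mul_sub, e, e']
  rcases Nat.lt_or_ge (d + 1) d' with hd | hd
  · have : (d : ℝ) + 2 ≤ d' := by exact_mod_cast hd
    linarith
  · have hd' : d' = d + 1 := by omega
    subst hd'
    have k1 : ¬ h (τ 1) := fun hh => C1.2.2.2.1 hh d C1.1.1 (d + 1) C1'.1.1 (by ring)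
    have k2 : h (τ' 1) := by
      by_contra hh
      exact C1'.2.2.2.2 hh d C1.1.1 (d + 1) C1'.1.1 (by ring)
    have := f.2 k1
    have := f'.1 k2
    push_cast
    linarith

lemma dig_sep (hA : ∀ a ∈ A, a < n) (hC : Coding n A l h) (k : ℕ) :
    ∀ {τ τ' : ℕ → Fin 2}, NC τ → NC τ' → (∀ i < k, dig l τ i = dig l τ' i) →
      dig l τ k ≠ dig l τ' k →
      1 ≤ (n : ℝ) ^ (k + 1) * |lcv n (dig l τ) - lcv n (dig l τ')| := by
  induction k with
  | zero =>
    intro τ τ' hτ hτ' _ hne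
    simp only [zero_add, pow_one]
    have hn : (0 : ℝ) ≤ n := by positivity
    rcases Nat.lt_or_gt_of_ne hne with hlt | hlt
    · have := dig_sep0 hA hC hτ hτ' hlt
      rw [abs_sub_comm]
      exact this.trans (mul_le_mul_of_nonneg_left (le_abs_self _) hn)
    · have := dig_sep0 hA hC hτ' hτ hlt
      exact this.trans (mul_le_mul_of_nonneg_left (le_abs_self _) hn)
  | succ k ih =>
    intro τ τ' hτ hτ' heq hne
    have i := ih hτ.shift hτ'.shift (fun i hi => heq (i + 1) (by omega)) hne
    have e := dig_shift hA hC τ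
    have e' := dig_shift hA hC τ'
    have h0 : l (τ 0) (τ 1) = l (τ' 0) (τ' 1) := heq 0 (by omega)
    rw [h0] at e
    have e5 : lcv n (dig l (fun i => τ (i + 1))) - lcv n (dig l (fun i => τ' (i + 1))) =
      (n : ℝ) * (lcv n (dig l τ) - lcv n (dig l τ')) := by linarith
    rw [e5, abs_mul, abs_of_nonneg (by positivity : (0 : ℝ) ≤ n)] at i
    rw [pow_succ]
    linarith

lemma NC_image_dim : 1 ≤ dimH ((Real.ofDigits (b := 2)) '' {τ | NC τ}) := by
  have hcount : ({τ | ¬ NC τ} : Set (ℕ → Fin 2)).Countable := by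
    refine (Set.countable_range
      (fun p : List (Fin 2) × Fin 2 => fun i => p.1.getD i p.2)).mono ?_
    intro τ hτ
    simp only [NC, Set.mem_setOf_eq] at hτ
    push Not at hτ
    obtain ⟨s, k, hk⟩ := hτ
    refine ⟨((List.range k).map τ, 1 - s), funext fun i => ?_⟩
    simp only [List.getD_eq_getElem?_getD]
    rcases Nat.lt_or_ge i k with hi | hi
    · simp [hi]
    · have h1 := hk i hi
      have : ((List.range k).map τ)[i]? = none := by simp [hi]
      rw [this]
      simp only [Option.getD_none]
      have aux : ∀ s x : Fin 2, x ≠ s → 1 - s = x := by decide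
      exact aux s _ h1
  have hsub : Set.Icc (0 : ℝ) 1 ⊆ (Real.ofDigits (b := 2)) '' {τ | NC τ} ∪
      (Real.ofDigits (b := 2)) '' {τ | ¬ NC τ} := by
    intro x hx
    obtain ⟨τ, -, rfl⟩ := Real.ofDigits_SurjOn (by norm_num : 1 < 2) hx
    by_cases hτ : NC τ
    · exact Or.inl ⟨τ, hτ, rfl⟩
    · exact Or.inr ⟨τ, hτ, rfl⟩
  have h1 := dimH_mono hsub
  rw [dimH_union, (hcount.image _).dimH_zero, Real.dimH_of_nonempty_interior
    (by rw [interior_Icc]; exact ⟨1 / 2, by norm_num, by norm_num⟩)] at h1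
  simpa using h1

lemma dim_bound (hn : 2 ≤ n) (hA : ∀ a ∈ A, a < n) (hC : Coding n A l h) (U : Set ℝ)
    (hU : ∀ τ, NC τ → 2 * lcv n (dig l τ) ∈ U) :
    ENNReal.ofReal (Real.log 2 / Real.log n) ≤ dimH U := by
  have hn' : (2 : ℝ) ≤ n := by exact_mod_cast hn
  have hlogn : 0 < Real.log n := Real.log_pos (by linarith)
  have hα : 0 < Real.log 2 / Real.log n := div_pos (Real.log_pos (by norm_num)) hlogn
  set g : (ℕ → Fin 2) → ℝ := fun τ => 2 * lcv n (dig l τ) with hg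
  have key : ∀ τ τ', NC τ → NC τ' → |Real.ofDigits τ - Real.ofDigits τ'| ≤
      2 * |g τ - g τ'| ^ (Real.log 2 / Real.log n) := by
    intro τ τ' hτ hτ'
    by_cases hd : dig l τ = dig l τ'
    · have : τ = τ' := by
        funext i
        by_contra hne
        exact hC.2 _ _ _ _ hne (congrFun hd i)
      subst this
      simp only [sub_self, abs_zero]
      positivity
    · have hex : ∃ k, dig l τ k ≠ dig l τ' k := by
        by_contra hcon; push Not at hcon; exact hd (funext hcon)
      classical
      have hk1 := Nat.find_spec hex
      have hk2 : ∀ i < Nat.find hex, dig l τ i = dig l τ' i := fun i hi => by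
        have := Nat.find_min hex hi
        push Not at this; exact this
      generalize Nat.find hex = k at *
      have s := dig_sep hA hC k hτ hτ' hk2 hk1
      have hτk : ∀ i < k, τ i = τ' i := fun i hi => by
        by_contra hne
        exact hC.2 _ _ _ _ hne (hk2 i hi)
      have b := Real.abs_ofDigits_sub_ofDigits_le hτk
      have s2 : ((n : ℝ) ^ (k + 1))⁻¹ ≤ |g τ - g τ'| := by
        rw [hg]
        simp only
        rw [← mul_sub, abs_mul, abs_two, inv_le_iff_one_le_mul₀' (by positivity)]
        have : 0 ≤ (n : ℝ) ^ (k + 1) * |lcv n (dig l τ) - lcv n (dig l τ')| := by positivity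
        linarith
      have pw : (((n : ℝ) ^ (k + 1))⁻¹) ^ (Real.log 2 / Real.log n) = ((2 : ℝ) ^ (k + 1))⁻¹ := by
        rw [Real.inv_rpow (by positivity), ← Real.rpow_natCast, ← Real.rpow_natCast,
          ← Real.rpow_mul (by positivity), mul_comm, Real.rpow_mul (by positivity)]
        congr 2
        rw [Real.rpow_def_of_pos (by linarith), mul_div_cancel₀ _ hlogn.ne',
          Real.exp_log (by norm_num)]
      have s3 := Real.rpow_le_rpow (by positivity) s2 hα.le
      rw [pw] at s3
      refine b.trans ?_
      have : (((2 : ℕ) : ℝ) ^ k)⁻¹ = 2 * ((2 : ℝ) ^ (k + 1))⁻¹ := by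
        push_cast; rw [pow_succ]; field_simp
      rw [this]
      linarith
  have hinj : Set.InjOn g {τ | NC τ} := by
    intro τ hτ τ' hτ' he
    by_contra hne
    have hex : ∃ k, dig l τ k ≠ dig l τ' k := by
      by_contra hcon; push Not at hcon
      apply hne
      funext i
      by_contra hne
      exact hC.2 _ _ _ _ hne (hcon i)
    classical
    have s := dig_sep hA hC (Nat.find hex) hτ hτ' (fun i hi => by
        have := Nat.find_min hex hi
        push Not at this; exact this) (Nat.find_spec hex)
    have : lcv n (dig l τ) = lcv n (dig l τ') := by
      simp only [hg] at he; linarith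
    rw [this] at s
    simp at s
    linarith
  set f : ℝ → ℝ := fun z => Real.ofDigits (Function.invFunOn g {τ | NC τ} z) with hf
  have hfg : ∀ τ, NC τ → f (g τ) = Real.ofDigits τ := fun τ hτ => by
    simp only [hf]
    rw [hinj.leftInvOn_invFunOn hτ]
  have hol : HolderOnWith 2 (Real.log 2 / Real.log n).toNNReal f (g '' {τ | NC τ}) := by
    rintro _ ⟨τ, hτ, rfl⟩ _ ⟨τ', hτ', rfl⟩
    rw [hfg τ hτ, hfg τ' hτ', Real.coe_toNNReal _ hα.le, edist_dist, edist_dist,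
      ENNReal.ofReal_rpow_of_nonneg dist_nonneg hα.le]
    have : ((2 : NNReal) : ENNReal) = ENNReal.ofReal 2 := by simp
    rw [this, ← ENNReal.ofReal_mul (by norm_num)]
    exact ENNReal.ofReal_le_ofReal (key τ τ' hτ hτ')
  have himg : f '' (g '' {τ | NC τ}) = (Real.ofDigits (b := 2)) '' {τ | NC τ} := by
    rw [Set.image_image]
    exact Set.image_congr fun τ hτ => hfg τ hτ
  have hdim := hol.dimH_image_le (Real.toNNReal_pos.2 hα)
  rw [himg] at hdim
  have h1 := NC_image_dim.trans hdim
  have h2 : dimH (g '' {τ | NC τ}) ≤ dimH U := dimH_mono (by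
    rintro _ ⟨τ, hτ, rfl⟩; exact hU τ hτ)
  refine le_trans ?_ h2
  have hne : ((Real.log 2 / Real.log n).toNNReal : ENNReal) ≠ 0 := by
    simpa using hα
  rw [ENNReal.le_div_iff_mul_le (Or.inl hne) (Or.inl ENNReal.coe_ne_top), one_mul] at h1
  exact h1

end suff

/-- Dichotomy: if `A` is `n`-good then the uniqueness set `U_A` is either `{0,2}`
or has Hausdorff dimension at least `log 2 / log n`. -/
theorem uniqueness_dichotomy (n : ℕ) (hn : 2 ≤ n) (A : Set ℕ)
    (h0 : 0 ∈ A) (htop : n - 1 ∈ A) (hA : ∀ a ∈ A, a < n)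
    (hgood : linCantor n A + linCantor n A = Set.Icc (0 : ℝ) 2) :
    ({z : ℝ | z ∈ Set.Icc (0 : ℝ) 2 ∧
        ∃! p : ℝ × ℝ, p.1 ∈ linCantor n A ∧ p.2 ∈ linCantor n A ∧
          p.1 ≤ p.2 ∧ p.1 + p.2 = z} = {0, 2}) ∨
    ENNReal.ofReal (Real.log 2 / Real.log n) ≤
      dimH {z : ℝ | z ∈ Set.Icc (0 : ℝ) 2 ∧
        ∃! p : ℝ × ℝ, p.1 ∈ linCantor n A ∧ p.2 ∈ linCantor n A ∧
          p.1 ≤ p.2 ∧ p.1 + p.2 = z} := by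

  simp only [exUnique_iff hgood]
  by_cases hex : ∃ z : ℝ, z ∈ Set.Icc (0 : ℝ) 2 ∧ Uq n A z ∧ z ≠ 0 ∧ z ≠ 2
  · right
    obtain ⟨z, hz, hq, hz0, hz2⟩ := hex
    obtain ⟨c, hc, hcq, hc0, hc2⟩ := exists_diag hn hA h0 htop hgood hz hq hz0 hz2
    obtain ⟨l, h, hC⟩ := exists_coding hn hA h0 htop hgood hc hcq hc0 hc2
    refine dim_bound hn hA hC _ fun τ hτ => ⟨?_, dig_uniq hn hA hC hτ⟩
    have := dig_pos hA hC hτ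
    exact ⟨by linarith, by linarith⟩
  · left
    push Not at hex
    ext z
    simp only [Set.mem_setOf_eq, Set.mem_insert_iff, Set.mem_singleton_iff]
    constructor
    · rintro ⟨hz, hq⟩
      by_cases hz0 : z = 0
      · exact Or.inl hz0
      · exact Or.inr (hex z hz hq hz0)
    · rintro (rfl | rfl)
      · refine ⟨by simp, fun u hu v hv u' hu' v' hv' e e' => ?_⟩
        have := lc_bd hA hu
        have := lc_bd hA hv
        have := lc_bd hA hu'
        have := lc_bd hA hv'
        left; linarith
      · refine ⟨by simp, fun u hu v hv u' hu' v' hv' e e' => ?_⟩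
        have := lc_bd hA hu
        have := lc_bd hA hv
        have := lc_bd hA hu'
        have := lc_bd hA hv'
        left; linarith
end
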